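/- Let 0 ≤ p ≤ 1 and let B ≥ 2 be a fixed integer. Consider random instances in F(n, m(n), B, p·P_{(1,1)} + (1−p)·P_{(2)}), where n ranges over multiples of B (so the community size is h = n/B), and suppose m(n)/n → r as n → ∞. Then: if r < 1, a random instance is satisfiable with high probability, and if r > 1, a random instance is unsatisfiable with high probability; i.e., the satisfiability threshold of this model is 1. -/

import Mathlib

open Filter Asymptotics

namespace RandIndSAT

attribute [local instance] Classical.propDecidable

/-- A clause over `n` Boolean variables: a finite set of literals, where a literal is a
variable together with a polarity (`true` = positive occurrence, `false` = negation). -/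
abbrev Clause (n : ℕ) := Finset (Fin n × Bool)

/-- The set of variables occurring in a clause. -/
def vars {n : ℕ} (C : Clause n) : Finset (Fin n) := C.image Prod.fst

/-- A clause is proper if its literals carry pairwise distinct variables. -/
def Proper {n : ℕ} (C : Clause n) : Prop := C.card = (vars C).card

/-- A truth assignment satisfies a clause if some literal of it evaluates to true. -/
def SatClause {n : ℕ} (σ : Fin n → Bool) (C : Clause n) : Prop :=
  ∃ l ∈ C, σ l.1 = l.2

/-- An instance (an `m`-tuple of clauses) is satisfiable. -/
def SatInstance {n m : ℕ} (I : Fin m → Clause n) : Prop :=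
  ∃ σ : Fin n → Bool, ∀ i, SatClause σ (I i)

/-- The community of a variable, where communities have size `h`:
community `i` consists of the variables `v` with `i*h ≤ v < (i+1)*h`. -/
def comm (h : ℕ) {n : ℕ} (v : Fin n) : ℕ := (v : ℕ) / h

/-- The type of a clause: the multiset of the (nonzero) numbers of its variables lying in
the various communities. -/
def clauseType (h : ℕ) {n : ℕ} (C : Clause n) : Multiset ℕ :=
  Multiset.filter (fun c => c ≠ 0)
    ((Finset.range n).val.map fun i => ((vars C).filter fun v => comm h v = i).card)

/-- `Ω_B(n, K)`: the set of all proper clauses of type `K`, for communities of size `h`. -/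
noncomputable def clausesOfType (n h : ℕ) (K : Multiset ℕ) : Finset (Clause n) :=
  Finset.univ.filter fun C => Proper C ∧ clauseType h C = K

/-- A clause type `K = (k_1, …, k_ℓ)` is valid for `n` variables split into communities of
size `h`: its entries are positive, `ℓ ≤ B = n/h`, and each `k_j ≤ h`. -/
def ValidType (n h : ℕ) (K : Multiset ℕ) : Prop :=
  0 ∉ K ∧ K.card ≤ n / h ∧ ∀ a ∈ K, a ≤ h

/-- The probability of drawing a given clause under the mixture `P = ∑_t p_t • P_{K_t}`
of the uniform measures `P_{K_t}` on the sets `Ω_B(n, K_t)`. -/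
noncomputable def clauseProb (n h : ℕ) {T : ℕ} (p : Fin T → ℝ) (K : Fin T → Multiset ℕ)
    (C : Clause n) : ℝ :=
  ∑ t, p t *
    (if C ∈ clausesOfType n h (K t) then ((clausesOfType n h (K t)).card : ℝ)⁻¹ else 0)

/-- The probability that a random instance of `F(n, m, B, P)` — communities of size
`h = n/B`, and `m` clauses drawn independently from `P = ∑_t p_t • P_{K_t}` — is
satisfiable. -/
noncomputable def satProb (n m h : ℕ) {T : ℕ} (p : Fin T → ℝ) (K : Fin T → Multiset ℕ) : ℝ :=
  ∑ I : Fin m → Clause n,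
    (∏ i, clauseProb n h p K (I i)) * (if SatInstance I then 1 else 0)

/-- The satisfiability probability for the model with the single-community clause type
`P_(k)`, i.e. `F(n, m, B, P_(k))` with communities of size `h = n/B`. -/
noncomputable def satProbSingle (n m h k : ℕ) : ℝ :=
  satProb n m h (fun _ : Fin 1 => (1 : ℝ)) fun _ => ({k} : Multiset ℕ)

/-- The satisfiability probability of a random `k`-SAT instance with `n` variables and `m`
clauses (the case of a single community of size `n`). -/
noncomputable def ksatProb (n m k : ℕ) : ℝ := satProbSingle n m n k

/-- `r_k`: the supremum of the densities `α` for which a random `k`-SAT instance with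
`⌈αn⌉` clauses is satisfiable w.h.p. -/
noncomputable def rSat (k : ℕ) : ℝ :=
  sSup {α : ℝ | 0 ≤ α ∧
    Tendsto (fun n : ℕ => ksatProb n ⌈α * (n : ℝ)⌉₊ k) atTop (nhds 1)}

/-- `r_k^*`: the infimum of the densities `α` for which a random `k`-SAT instance with
`⌈αn⌉` clauses is unsatisfiable w.h.p. -/
noncomputable def rUnsat (k : ℕ) : ℝ :=
  sInf {α : ℝ | 0 ≤ α ∧
    Tendsto (fun n : ℕ => ksatProb n ⌈α * (n : ℝ)⌉₊ k) atTop (nhds 0)}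

lemma exists_removeNth_eq {α : Type*} {m : ℕ} {I : Fin (m + 1) → α} {i j : Fin (m + 1)}
    (h : I j ≠ I i) : ∃ k, i.removeNth I k = I j := by
  obtain ⟨k, rfl⟩ := Fin.exists_succAbove_eq (x := j) (y := i) (fun e => h (by rw [e]))
  exact ⟨k, rfl⟩

section ProductProbability

variable {α : Type*} [Fintype α]

/-- The probability of the event `E` for `m` independent draws with probability weights `q`. -/
noncomputable def prob (q : α → ℝ) (m : ℕ) (E : (Fin m → α) → Prop) : ℝ :=
  ∑ I, (∏ i, q (I i)) * (if E I then 1 else 0)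

variable {q : α → ℝ}

lemma prob_nonneg (hq : ∀ a, 0 ≤ q a) {m : ℕ} (E : (Fin m → α) → Prop) : 0 ≤ prob q m E := by
  refine Finset.sum_nonneg fun I _ => mul_nonneg (Finset.prod_nonneg fun i _ => hq _) ?_
  split_ifs <;> norm_num

lemma prob_mono (hq : ∀ a, 0 ≤ q a) {m : ℕ} {E E' : (Fin m → α) → Prop}
    (h : ∀ I, (∀ i, q (I i) ≠ 0) → E I → E' I) : prob q m E ≤ prob q m E' := by
  refine Finset.sum_le_sum fun I _ => ?_
  by_cases hI : ∀ i, q (I i) ≠ 0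
  · refine mul_le_mul_of_nonneg_left ?_ (Finset.prod_nonneg fun i _ => hq _)
    have := h I hI
    by_cases hE : E I
    · simp [hE, this hE]
    · simp only [hE, if_false]
      split_ifs <;> norm_num
  · push Not at hI
    obtain ⟨i, hi⟩ := hI
    rw [Finset.prod_eq_zero (Finset.mem_univ i) hi]
    simp

lemma prob_true (hq1 : ∑ a, q a = 1) (m : ℕ) : prob q m (fun _ => True) = 1 := by
  simp only [prob, if_true, mul_one]
  rw [← Fintype.sum_pow, hq1, one_pow]

lemma prob_add_prob_not (hq1 : ∑ a, q a = 1) {m : ℕ} (E : (Fin m → α) → Prop) :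
    prob q m E + prob q m (fun I => ¬ E I) = 1 := by
  rw [← prob_true hq1 m, prob, prob, prob, ← Finset.sum_add_distrib]
  refine Finset.sum_congr rfl fun I _ => ?_
  by_cases h : E I <;> simp [h]

lemma prob_le_one (hq : ∀ a, 0 ≤ q a) (hq1 : ∑ a, q a = 1) {m : ℕ} (E : (Fin m → α) → Prop) :
    prob q m E ≤ 1 := by
  have := prob_add_prob_not hq1 E
  have := prob_nonneg hq (fun I => ¬ E I)
  linarith

lemma prob_or_le (hq : ∀ a, 0 ≤ q a) {m : ℕ} (E E' : (Fin m → α) → Prop) :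
    prob q m (fun I => E I ∨ E' I) ≤ prob q m E + prob q m E' := by
  rw [prob, prob, prob, ← Finset.sum_add_distrib]
  refine Finset.sum_le_sum fun I _ => ?_
  rw [← mul_add]
  refine mul_le_mul_of_nonneg_left ?_ (Finset.prod_nonneg fun i _ => hq _)
  by_cases h : E I <;> by_cases h' : E' I <;> simp [h, h']

lemma prob_exists_le (hq : ∀ a, 0 ≤ q a) {m : ℕ} {ι : Type*} [Fintype ι]
    (E : ι → (Fin m → α) → Prop) :
    prob q m (fun I => ∃ x, E x I) ≤ ∑ x, prob q m (E x) := by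
  simp only [prob]
  rw [Finset.sum_comm]
  refine Finset.sum_le_sum fun I _ => ?_
  rw [← Finset.mul_sum]
  refine mul_le_mul_of_nonneg_left ?_ (Finset.prod_nonneg fun i _ => hq _)
  have hnn : ∀ x, (0 : ℝ) ≤ if E x I then 1 else 0 := fun x => by split_ifs <;> norm_num
  split_ifs with h
  · obtain ⟨x, hx⟩ := h
    calc (1 : ℝ) = if E x I then 1 else 0 := by simp [hx]
      _ ≤ _ := Finset.single_le_sum (f := fun x => if E x I then (1 : ℝ) else 0)
        (fun x _ => hnn x) (Finset.mem_univ x)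
  · exact Finset.sum_nonneg fun x _ => hnn x

lemma prob_avoid (hq1 : ∑ a, q a = 1) (m : ℕ) (Z : Finset α) :
    prob q m (fun I => ∀ i, I i ∉ Z) = (1 - ∑ a ∈ Z, q a) ^ m := by
  have h : 1 - ∑ a ∈ Z, q a = ∑ a, q a * (if a ∉ Z then 1 else 0) := by
    have h0 := Finset.sum_add_sum_compl Z q
    rw [hq1] at h0
    have h1 : ∑ a, q a * (if a ∉ Z then 1 else 0) = ∑ a ∈ Zᶜ, q a := by
      simp [Finset.sum_ite, Finset.compl_eq_univ_sdiff, Finset.sdiff_eq_filter]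
    linarith
  rw [h, Fintype.sum_pow, prob]
  refine Finset.sum_congr rfl fun I _ => ?_
  rw [Finset.prod_mul_distrib, Finset.prod_ite_zero]
  simp

lemma prob_avoid_le (hq : ∀ a, 0 ≤ q a) (hq1 : ∑ a, q a = 1) (m : ℕ) (Z : Finset α) :
    prob q m (fun I => ∀ i, I i ∉ Z) ≤ Real.exp (-(m * ∑ a ∈ Z, q a)) := by
  rw [prob_avoid hq1, ← mul_neg, Real.exp_nat_mul]
  refine pow_le_pow_left₀ ?_ (by linarith [Real.add_one_le_exp (-∑ a ∈ Z, q a)]) m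
  rw [← hq1, sub_nonneg]
  exact Finset.sum_le_sum_of_subset_of_nonneg (Finset.subset_univ _) fun a _ _ => hq a

lemma prob_eq_at {m : ℕ} (i : Fin (m + 1)) (c : α) (E : (Fin m → α) → Prop) :
    prob q (m + 1) (fun I => I i = c ∧ E (i.removeNth I)) = q c * prob q m E := by
  rw [prob, ← (Fin.insertNthEquiv (fun _ => α) i).sum_comp, Fintype.sum_prod_type,
    Finset.sum_eq_single c, prob, Finset.mul_sum]
  · refine Finset.sum_congr rfl fun I _ => ?_
    have h : i.removeNth (Fin.insertNthEquiv (fun _ => α) i (c, I)) = I := by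
      simp [Fin.insertNthEquiv]
    rw [h]
    simp [Fin.prod_univ_succAbove _ i]
  · intro b _ hb
    simp [hb]
  · simp

lemma prob_exists_eq_le (hq : ∀ a, 0 ≤ q a) {m : ℕ} (c : α) (E : (Fin m → α) → Prop) :
    prob q (m + 1) (fun I => ∃ i, I i = c ∧ E (i.removeNth I)) ≤
      (m + 1 : ℕ) * (q c * prob q m E) := by
  refine (prob_exists_le hq _).trans ?_
  simp [prob_eq_at]

lemma prob_contains_le (hq : ∀ a, 0 ≤ q a) (hq1 : ∑ a, q a = 1) (D : List α) (hD : D.Nodup)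
    (m : ℕ) :
    prob q m (fun I => ∀ c ∈ D, ∃ i, I i = c) ≤ (m : ℝ) ^ D.length * (D.map q).prod := by
  induction D generalizing m with
  | nil => simpa using prob_le_one hq hq1 _
  | cons c D ih =>
    rw [List.nodup_cons] at hD
    have hp : 0 ≤ (D.map q).prod := List.prod_nonneg (by simpa using fun a _ => hq a)
    cases m with
    | zero =>
      have : prob q 0 (fun I => ∀ c' ∈ c :: D, ∃ i, I i = c') = 0 := by
        simp only [prob, IsEmpty.exists_iff, List.mem_cons, forall_eq_or_imp, false_and, if_false,
          mul_zero, Finset.sum_const_zero]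
      rw [this]
      simp
    | succ k =>
      calc _ ≤ prob q (k + 1) (fun I => ∃ i, I i = c ∧ ∀ c' ∈ D, ∃ j, i.removeNth I j = c') := by
            refine prob_mono hq fun I _ h => ?_
            obtain ⟨i, hi⟩ := h c (by simp)
            refine ⟨i, hi, fun c' hc' => ?_⟩
            obtain ⟨j, rfl⟩ := h c' (by simp [hc'])
            exact exists_removeNth_eq fun e => hD.1 (by rwa [← hi, ← e])
        _ ≤ (k + 1 : ℕ) * (q c * prob q k fun I => ∀ c' ∈ D, ∃ j, I j = c') :=
            prob_exists_eq_le hq c fun I => ∀ c' ∈ D, ∃ j, I j = c'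
        _ ≤ (k + 1 : ℕ) * (q c * ((k : ℝ) ^ D.length * (D.map q).prod)) := by
            gcongr
            · exact hq c
            · exact ih hD.2 k
        _ ≤ (k + 1 : ℕ) * (q c * (((k + 1 : ℕ) : ℝ) ^ D.length * (D.map q).prod)) := by
            gcongr
            · exact hq c
            · simp
        _ = _ := by
            simp only [List.length_cons, List.map_cons, List.prod_cons]
            ring

lemma prob_append_le (hq : ∀ a, 0 ≤ q a) (hq1 : ∑ a, q a = 1) {k l : ℕ}
    (E : (Fin (k + l) → α) → Prop) (A : (Fin k → α) → Prop) {ε : ℝ}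
    (h : ∀ I, (∀ i, q (I i) ≠ 0) → ¬ A I → prob q l (fun J => E (Fin.append I J)) ≤ ε)
    (hε : 0 ≤ ε) :
    prob q (k + l) E ≤ prob q k A + ε := by
  have h1 : prob q (k + l) E =
      ∑ I : Fin k → α, (∏ i, q (I i)) * prob q l (fun J => E (Fin.append I J)) := by
    rw [prob, ← (Fin.appendEquiv k l).sum_comp, Fintype.sum_prod_type]
    refine Finset.sum_congr rfl fun I _ => ?_
    rw [prob, Finset.mul_sum]
    refine Finset.sum_congr rfl fun J _ => ?_
    simp only [Fin.appendEquiv, Equiv.coe_fn_mk, Fin.prod_univ_add, Fin.append_left,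
      Fin.append_right, mul_assoc]
    congr
  have h2 : ε = ∑ I : Fin k → α, (∏ i, q (I i)) * ε := by
    rw [← Finset.sum_mul, ← Fintype.sum_pow, hq1]
    simp
  rw [h1, h2, prob, ← Finset.sum_add_distrib]
  refine Finset.sum_le_sum fun I _ => ?_
  rw [← mul_add]
  by_cases hI : ∀ i, q (I i) ≠ 0
  · refine mul_le_mul_of_nonneg_left ?_ (Finset.prod_nonneg fun i _ => hq _)
    by_cases hA : A I
    · simpa [hA] using (prob_le_one hq hq1 _).trans (by linarith)
    · simpa [hA] using h I hI hA
  · push Not at hI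
    obtain ⟨i, hi⟩ := hI
    rw [Finset.prod_eq_zero (Finset.mem_univ i) hi]
    simp

end ProductProbability

section Implication

variable {n : ℕ}

/-- The complementary literal. -/
def neg (l : Fin n × Bool) : Fin n × Bool := (l.1, !l.2)

@[simp] lemma neg_neg (l : Fin n × Bool) : neg (neg l) = l := by simp [neg]

@[simp] lemma neg_fst (l : Fin n × Bool) : (neg l).1 = l.1 := rfl

lemma neg_ne (l : Fin n × Bool) : neg l ≠ l := by
  intro h
  simpa [neg] using congrArg Prod.snd h

lemma eq_or_eq_neg {a b : Fin n × Bool} (h : a.1 = b.1) : a = b ∨ a = neg b := by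
  rcases a with ⟨a, x⟩
  rcases b with ⟨b, y⟩
  cases x <;> cases y <;> simp_all [neg]

/-- The clause `¬a ∨ b` expressing that the literal `a` implies the literal `b`. -/
def implClause (a b : Fin n × Bool) : Clause n := {neg a, b}

lemma implClause_neg (a b : Fin n × Bool) : implClause (neg b) (neg a) = implClause a b := by
  simp [implClause, Finset.pair_comm]

/-- A clause consisting of two literals with distinct variables. -/
def IsTwoClause (C : Clause n) : Prop := ∃ a b : Fin n × Bool, a.1 ≠ b.1 ∧ C = {a, b}

lemma IsTwoClause.fst_ne {a b : Fin n × Bool} (h : IsTwoClause (implClause a b)) :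
    a.1 ≠ b.1 := by
  obtain ⟨x, y, hxy, h⟩ := h
  intro hab
  have hx : x ∈ implClause a b := by simp [h]
  have hy : y ∈ implClause a b := by simp [h]
  simp only [implClause, Finset.mem_insert, Finset.mem_singleton] at hx hy
  rcases hx with rfl | rfl <;> rcases hy with rfl | rfl <;> simp_all

/-- Every two-clause containing the literal `l` is an implication out of `¬l`. -/
lemma IsTwoClause.exists_eq_implClause {C : Clause n} (h : IsTwoClause C) {l : Fin n × Bool}
    (hl : l ∈ C) : ∃ b, C = implClause (neg l) b := by
  obtain ⟨x, y, -, rfl⟩ := h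
  simp only [Finset.mem_insert, Finset.mem_singleton] at hl
  rcases hl with rfl | rfl
  · exact ⟨y, by simp [implClause]⟩
  · exact ⟨x, by simp [implClause, Finset.pair_comm]⟩

/-- The clauses expressing the consecutive implications along a list of literals. -/
def pathClauses : List (Fin n × Bool) → List (Clause n)
  | [] => []
  | [_] => []
  | a :: b :: l => implClause a b :: pathClauses (b :: l)

lemma length_pathClauses (a : Fin n × Bool) (l : List (Fin n × Bool)) :
    (pathClauses (a :: l)).length = l.length := by
  induction l generalizing a with
  | nil => rfl
  | cons b l ih => simp [pathClauses, ih]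

lemma forall_mem_pathClauses_iff {P : Clause n → Prop} (l : List (Fin n × Bool)) :
    (∀ C ∈ pathClauses l, P C) ↔ l.IsChain (fun a b => P (implClause a b)) := by
  induction l with
  | nil => simp [pathClauses]
  | cons a l ih =>
    cases l with
    | nil => simp [pathClauses]
    | cons b l => simp [pathClauses, ih]

lemma fst_mem_of_mem_pathClauses {w : List (Fin n × Bool)} {C : Clause n}
    (hC : C ∈ pathClauses w) {x : Fin n × Bool} (hx : x ∈ C) : x.1 ∈ w.map Prod.fst := by
  induction w with
  | nil => simp [pathClauses] at hC
  | cons a w ih =>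
    cases w with
    | nil => simp [pathClauses] at hC
    | cons b l =>
      simp only [pathClauses, List.mem_cons] at hC
      rcases hC with rfl | hC
      · simp only [implClause, Finset.mem_insert, Finset.mem_singleton] at hx
        rcases hx with rfl | rfl <;> simp
      · exact List.mem_cons_of_mem _ (ih hC)

lemma nodup_pathClauses {w : List (Fin n × Bool)} (hw : (w.map Prod.fst).Nodup) :
    (pathClauses w).Nodup := by
  induction w with
  | nil => simp [pathClauses]
  | cons a w ih =>
    cases w with
    | nil => simp [pathClauses]
    | cons b l =>
      rw [List.map_cons, List.nodup_cons] at hw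
      simp only [pathClauses, List.nodup_cons]
      refine ⟨fun h => hw.1 ?_, ih hw.2⟩
      exact fst_mem_of_mem_pathClauses h (x := neg a) (by simp [implClause])

lemma head_notMem_pathClauses {a : Fin n × Bool} {w : List (Fin n × Bool)}
    (hw : ((a :: w).map Prod.fst).Nodup) {C : Clause n} (hC : C ∈ pathClauses (a :: w)) :
    a ∉ C := by
  intro ha
  rw [List.map_cons, List.nodup_cons] at hw
  cases w with
  | nil => simp [pathClauses] at hC
  | cons b l =>
    simp only [pathClauses, List.mem_cons] at hC
    rcases hC with rfl | hC
    · simp only [implClause, Finset.mem_insert, Finset.mem_singleton] at ha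
      rcases ha with ha | rfl
      · exact neg_ne a ha.symm
      · simp at hw
    · exact hw.1 (fst_mem_of_mem_pathClauses hC ha)

lemma neg_getLast_notMem_pathClauses {w : List (Fin n × Bool)} (hne : w ≠ [])
    (hw : (w.map Prod.fst).Nodup) {C : Clause n} (hC : C ∈ pathClauses w) :
    neg (w.getLast hne) ∉ C := by
  induction w with
  | nil => simp [pathClauses] at hC
  | cons a w ih =>
    cases w with
    | nil => simp [pathClauses] at hC
    | cons b l =>
      have hw' := hw
      rw [List.map_cons, List.nodup_cons] at hw
      simp only [pathClauses, List.mem_cons] at hC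
      rw [List.getLast_cons (by simp)]
      have hlast := List.getLast_mem (l := b :: l) (by simp)
      rcases hC with rfl | hC
      · simp only [implClause, Finset.mem_insert, Finset.mem_singleton]
        rintro (h | h)
        · refine hw.1 ?_
          rw [← neg_fst a, ← h, neg_fst]
          exact List.mem_map_of_mem hlast
        · cases l with
          | nil => exact neg_ne _ h
          | cons c l =>
            rw [List.getLast_cons (by simp)] at h
            rw [List.map_cons, List.nodup_cons] at hw
            refine hw.2.1 ?_
            rw [← h, neg_fst]
            exact List.mem_map_of_mem (List.getLast_mem (by simp))
      · exact ih (by simp) hw.2 hC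

/-- All clauses of `F` can be satisfied simultaneously. -/
def Satisfiable (F : Finset (Clause n)) : Prop := ∃ σ : Fin n → Bool, ∀ C ∈ F, SatClause σ C

/-- A path of implications in `F` through distinct variables that starts with a
successor of a literal on a variable of the path and ends with a predecessor of the negation of
a literal of the path. -/
def IsBicycle (F : Finset (Clause n)) (w : List (Fin n × Bool)) : Prop :=
  (w.map Prod.fst).Nodup ∧ (w.IsChain fun a b => implClause a b ∈ F) ∧
    (∃ u : Fin n × Bool, u.1 ∈ w.map Prod.fst ∧ ∀ a ∈ w.head?, implClause u a ∈ F) ∧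
    ∃ v ∈ w, ∀ a ∈ w.getLast?, implClause a (neg v) ∈ F

lemma IsBicycle.mono {F F' : Finset (Clause n)} (h : F ⊆ F') {w : List (Fin n × Bool)}
    (hw : IsBicycle F w) : IsBicycle F' w := by
  obtain ⟨h1, h2, ⟨u, hu, hu'⟩, v, hv, hv'⟩ := hw
  exact ⟨h1, h2.imp fun a b hab => h hab, ⟨u, hu, fun a ha => h (hu' a ha)⟩,
    v, hv, fun a ha => h (hv' a ha)⟩

/-- In a minimally unsatisfiable formula every consistent set of literals has an
implication leaving it. -/
lemma exists_implClause_mem_of_minimal {F : Finset (Clause n)} (h2 : ∀ C ∈ F, IsTwoClause C)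
    (hF : ¬ Satisfiable F) (hmin : ∀ F' ⊂ F, Satisfiable F') (L : Set (Fin n × Bool))
    (hL : ∀ a ∈ L, neg a ∉ L) {C : Clause n} (hC : C ∈ F) {l : Fin n × Bool} (hl : l ∈ C)
    (hlL : l ∈ L ∨ neg l ∈ L) : ∃ a ∈ L, ∃ b ∉ L, implClause a b ∈ F := by
  by_contra! hcl
  have hss : F.filter (fun C => ∀ l ∈ C, l ∉ L ∧ neg l ∉ L) ⊂ F := by
    refine Finset.filter_ssubset.2 ⟨C, hC, fun h => ?_⟩
    have := h l hl
    tauto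
  obtain ⟨σ, hσ⟩ := hmin _ hss
  refine hF ⟨fun x => if (x, true) ∈ L then true else if (x, false) ∈ L then false else σ x,
    fun D hD => ?_⟩
  have key : ∀ l ∈ L, (if (l.1, true) ∈ L then true else if (l.1, false) ∈ L then false
      else σ l.1) = l.2 := by
    rintro ⟨x, b⟩ hx
    cases b
    · have := hL _ hx
      simp only [neg, Bool.not_false] at this
      simp [this, hx]
    · simp [hx]
  by_cases hDL : ∀ l ∈ D, l ∉ L ∧ neg l ∉ L
  · obtain ⟨l, hlD, hl⟩ := hσ D (Finset.mem_filter.2 ⟨hD, hDL⟩)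
    refine ⟨l, hlD, ?_⟩
    have h := hDL l hlD
    rcases l with ⟨x, b⟩
    cases b <;> simp_all [neg]
  · push Not at hDL
    obtain ⟨l, hlD, hl⟩ := hDL
    by_cases hlL : l ∈ L
    · exact ⟨l, hlD, key l hlL⟩
    · obtain ⟨b, rfl⟩ := (h2 D hD).exists_eq_implClause hlD
      by_cases hb : b ∈ L
      · exact ⟨b, by simp [implClause], key b hb⟩
      · exact absurd hD (hcl _ (hl hlL) b hb)

lemma exists_repeated_fst {w : List (Fin n × Bool)} (hw : ¬ (w.map Prod.fst).Nodup) :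
    ∃ A x M y C, w = A ++ x :: (M ++ y :: C) ∧ x.1 = y.1 := by
  induction w with
  | nil => simp at hw
  | cons a w ih =>
    rw [List.map_cons, List.nodup_cons, not_and_or, not_not] at hw
    rcases hw with h | h
    · obtain ⟨y, hy, hya⟩ := List.mem_map.1 h
      obtain ⟨M, C, rfl⟩ := List.append_of_mem hy
      exact ⟨[], a, M, y, C, rfl, hya.symm⟩
    · obtain ⟨A, x, M, y, C, rfl, hxy⟩ := ih h
      exact ⟨a :: A, x, M, y, C, rfl, hxy⟩

/-- A path from a literal to its negation can be shortened so that it visits every variable at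
most once. -/
lemma exists_nodup_chain_to_neg {R : Fin n × Bool → Fin n × Bool → Prop}
    (w : List (Fin n × Bool)) (hne : w ≠ []) (hw : w.IsChain R)
    (hlast : ∀ h ∈ w.head?, ∀ b ∈ w.getLast?, R b (neg h)) :
    ∃ w : List (Fin n × Bool), w ≠ [] ∧ (w.map Prod.fst).Nodup ∧ w.IsChain R ∧
      ∃ v ∈ w, ∀ b ∈ w.getLast?, R b (neg v) := by
  induction hk : w.length using Nat.strong_induction_on generalizing w with
  | _ k ih =>
  by_cases hnd : (w.map Prod.fst).Nodup
  · refine ⟨w, hne, hnd, hw, w.head hne, List.head_mem hne, fun b hb => ?_⟩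
    exact hlast _ (List.head_mem_head? hne) b hb
  · obtain ⟨A, x, M, y, C, rfl, hxy⟩ := exists_repeated_fst hnd
    rcases eq_or_eq_neg hxy with rfl | rfl
    · refine ih _ ?_ (A ++ x :: C) (by simp) ?_ ?_ rfl
      · rw [← hk]
        simp only [List.length_append, List.length_cons]
        omega
      · rw [List.isChain_split] at hw ⊢
        exact ⟨hw.1, (List.isChain_cons_split.1 hw.2).2⟩
      · intro h hh b hb
        refine hlast h ?_ b ?_
        · cases A <;> simpa using hh
        · simpa [List.getLast?_append, List.getLast?_cons] using hb
    · refine ih _ ?_ (neg y :: M) (by simp) ?_ ?_ rfl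
      · rw [← hk]
        simp only [List.length_append, List.length_cons]
        omega
      · rw [List.isChain_split] at hw
        have := hw.2
        rw [← List.cons_append] at this
        exact this.left_of_append
      · intro h hh b hb
        simp only [List.head?_cons, Option.mem_def, Option.some.injEq] at hh
        subst hh
        rw [List.isChain_split, ← List.cons_append] at hw
        simpa using (List.isChain_append.1 hw.2).2.2 b hb y (by simp)

/-- A minimally unsatisfiable formula contains a bicycle as soon as it contains a path of
implications leading to the negation of one of its own literals. -/
lemma exists_isBicycle_of_chain {F : Finset (Clause n)} (h2 : ∀ C ∈ F, IsTwoClause C)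
    (hF : ¬ Satisfiable F) (hmin : ∀ F' ⊂ F, Satisfiable F') (w : List (Fin n × Bool))
    (hne : w ≠ []) (hnd : (w.map Prod.fst).Nodup) (hw : w.IsChain fun a b => implClause a b ∈ F)
    (hlast : ∃ v ∈ w, ∀ b ∈ w.getLast?, implClause b (neg v) ∈ F) :
    ∃ w, w ≠ [] ∧ IsBicycle F w := by
  induction hk : n - w.length using Nat.strong_induction_on generalizing w with
  | _ k ih =>
  obtain ⟨a, l, rfl⟩ := List.exists_cons_of_ne_nil hne
  obtain ⟨C, hC, haC⟩ : ∃ C ∈ F, neg a ∈ C := by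
    cases l with
    | nil =>
      obtain ⟨v, hv, h⟩ := hlast
      exact ⟨_, h a (by simp), by simp [implClause]⟩
    | cons b l =>
      exact ⟨_, (List.isChain_cons_cons.1 hw).1, by simp [implClause]⟩
  obtain ⟨x, hx, y, hy, hxy⟩ := exists_implClause_mem_of_minimal h2 hF hmin {neg a}
    (by simpa using (neg_ne a).symm) hC haC (by simp)
  rw [Set.mem_singleton_iff] at hx
  subst hx
  have hu : implClause (neg y) a ∈ F := by
    rw [← implClause_neg, neg_neg]
    exact hxy
  by_cases hy' : (neg y).1 ∈ (a :: l).map Prod.fst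
  · exact ⟨a :: l, hne, hnd, hw, ⟨neg y, hy', by simpa using hu⟩, hlast⟩
  · have hlen : (neg y :: a :: l).length ≤ n := by
      have : ((neg y :: a :: l).map Prod.fst).Nodup := by
        rw [List.map_cons, List.nodup_cons]
        exact ⟨hy', hnd⟩
      simpa using this.length_le_card
    refine ih _ ?_ (neg y :: a :: l) (by simp) ?_ ?_ ?_ rfl
    · rw [← hk]
      simp only [List.length_cons] at hlen ⊢
      omega
    · rw [List.map_cons, List.nodup_cons]
      exact ⟨hy', hnd⟩
    · rw [List.isChain_cons_cons]
      exact ⟨hu, hw⟩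
    · obtain ⟨v, hv, h⟩ := hlast
      exact ⟨v, List.mem_cons_of_mem _ hv, by simpa [List.getLast?_cons] using h⟩

lemma exists_isBicycle {F : Finset (Clause n)} (h2 : ∀ C ∈ F, IsTwoClause C)
    (hF : ¬ Satisfiable F) : ∃ w, w ≠ [] ∧ IsBicycle F w := by
  induction F using Finset.strongInduction with
  | H F ih =>
  by_cases hmin : ∀ F' ⊂ F, Satisfiable F'
  · obtain ⟨C, hC⟩ : F.Nonempty := by
      rw [Finset.nonempty_iff_ne_empty]
      rintro rfl
      exact hF ⟨fun _ => true, by simp⟩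
    obtain ⟨x, z, -, hxz⟩ := h2 C hC
    have hx : x ∈ C := by simp [hxz]
    obtain ⟨y, hy, hy'⟩ : ∃ y, Relation.ReflTransGen (fun a b => implClause a b ∈ F) x y ∧
        Relation.ReflTransGen (fun a b => implClause a b ∈ F) x (neg y) := by
      by_contra! hcon
      obtain ⟨a, ha, b, hb, hab⟩ := exists_implClause_mem_of_minimal h2 hF hmin
        {y | Relation.ReflTransGen (fun a b => implClause a b ∈ F) x y} hcon hC hx
        (Or.inl Relation.ReflTransGen.refl)
      exact hb (Relation.ReflTransGen.tail ha hab)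
    have hrev : Relation.ReflTransGen (fun a b => implClause a b ∈ F) y (neg x) := by
      rw [← neg_neg y]
      clear hy
      generalize neg y = y at hy'
      induction hy' with
      | refl => exact .refl
      | tail _ hab ih' =>
        refine .head ?_ ih'
        rw [implClause_neg]
        exact hab
    rcases Relation.ReflTransGen.cases_tail (hy.trans hrev) with h | ⟨c, hc, hcx⟩
    · exact absurd h (neg_ne x)
    · obtain ⟨l, hl, hlast⟩ := List.exists_isChain_cons_of_relationReflTransGen hc
      obtain ⟨w, hne, hnd, hw, hv⟩ := exists_nodup_chain_to_neg (x :: l) (by simp) hl (by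
        intro h hh b hb
        rw [List.getLast?_eq_some_getLast (List.cons_ne_nil _ _), hlast] at hb
        simp only [List.head?_cons, Option.mem_def, Option.some.injEq] at hh hb
        subst hh hb
        exact hcx)
      exact exists_isBicycle_of_chain h2 hF hmin w hne hnd hw hv
  · push Not at hmin
    obtain ⟨F', hF', hns⟩ := hmin
    obtain ⟨w, hne, hw⟩ := ih F' hF' (fun C hC => h2 C (hF'.1 hC)) hns
    exact ⟨w, hne, hw.mono hF'.1⟩

end Implication

section Balanced

variable {n : ℕ}

/-- Weights of a random two-clause for which every literal is equally likely to occur and no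
clause has a weight of order larger than `1 / n ^ 2`. -/
structure IsBalanced (q : Clause n → ℝ) (c : ℝ) : Prop where
  nonneg : ∀ C, 0 ≤ q C
  sum_eq_one : ∑ C, q C = 1
  isTwoClause : ∀ C, q C ≠ 0 → IsTwoClause C
  sum_implClause : ∀ a, ∑ b, q (implClause a b) = 1 / n
  le_bound : ∀ C, q C ≤ c / (n : ℝ) ^ 2

lemma satInstance_iff_satisfiable {m : ℕ} (I : Fin m → Clause n) :
    SatInstance I ↔ Satisfiable (Finset.univ.image I) := by
  simp [SatInstance, Satisfiable]

variable {q : Clause n → ℝ} {c : ℝ}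

lemma IsBalanced.sum_prod_pathClauses (hq : IsBalanced q c) (s : ℕ) (a : Fin n × Bool) :
    ∑ w : Fin s → Fin n × Bool, ((pathClauses (a :: List.ofFn w)).map q).prod =
      (1 / (n : ℝ)) ^ s := by
  induction s generalizing a with
  | zero => simp [pathClauses]
  | succ s ih =>
    rw [← (Fin.consEquiv fun _ => Fin n × Bool).sum_comp, Fintype.sum_prod_type]
    simp only [Fin.consEquiv, Equiv.coe_fn_mk, List.ofFn_cons, pathClauses, List.map_cons,
      List.prod_cons]
    simp only [← Finset.mul_sum, ih]
    rw [← Finset.sum_mul, hq.sum_implClause, pow_succ']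

/-- The clauses of the bicycle along the path `a :: l` with end literals `u` and `neg v`. -/
def bicycleClauses (u v a : Fin n × Bool) (l : List (Fin n × Bool)) : List (Clause n) :=
  implClause u a :: implClause ((a :: l).getLast (List.cons_ne_nil _ _)) (neg v) ::
    pathClauses (a :: l)

lemma nodup_bicycleClauses {u v a : Fin n × Bool} {l : List (Fin n × Bool)}
    (hnd : ((a :: l).map Prod.fst).Nodup) (hv : v ∈ a :: l) :
    (bicycleClauses u v a l).Nodup := by
  have hneg : ∀ x ∈ a :: l, a ≠ neg x := by
    intro x hx h
    rcases List.mem_cons.1 hx with rfl | hx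
    · exact neg_ne _ h.symm
    · rw [List.map_cons, List.nodup_cons] at hnd
      refine hnd.1 ?_
      rw [h, neg_fst]
      exact List.mem_map_of_mem hx
  simp only [bicycleClauses, List.nodup_cons, List.mem_cons, not_or]
  refine ⟨⟨fun h => ?_, fun h => ?_⟩, fun h => ?_, nodup_pathClauses hnd⟩
  · have ha : a ∈ implClause u a := by simp [implClause]
    rw [h] at ha
    simp only [implClause, Finset.mem_insert, Finset.mem_singleton] at ha
    rcases ha with ha | ha
    · exact hneg _ (List.getLast_mem _) ha
    · exact hneg v hv ha
  · exact head_notMem_pathClauses hnd h (by simp [implClause])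
  · exact neg_getLast_notMem_pathClauses (List.cons_ne_nil _ _) hnd h (by simp [implClause])

lemma IsBalanced.prob_bicycleClauses_le (hq : IsBalanced q c) (m : ℕ) (u v a : Fin n × Bool)
    (l : List (Fin n × Bool)) (hv : v ∈ a :: l) :
    prob q m (fun I => ((a :: l).map Prod.fst).Nodup ∧
      ∀ C ∈ bicycleClauses u v a l, ∃ i, I i = C) ≤
      (m : ℝ) ^ (l.length + 2) * ((c / (n : ℝ) ^ 2) ^ 2 * ((pathClauses (a :: l)).map q).prod) := by
  have hp : 0 ≤ ((pathClauses (a :: l)).map q).prod :=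
    List.prod_nonneg (by simpa using fun a _ => hq.nonneg a)
  by_cases hnd : ((a :: l).map Prod.fst).Nodup
  · refine (prob_mono hq.nonneg fun I _ h => h.2).trans
      ((prob_contains_le hq.nonneg hq.sum_eq_one _ (nodup_bicycleClauses hnd hv) m).trans ?_)
    simp only [bicycleClauses, List.length_cons, length_pathClauses, List.map_cons,
      List.prod_cons]
    refine mul_le_mul_of_nonneg_left ?_ (by positivity)
    rw [← mul_assoc, sq]
    refine mul_le_mul_of_nonneg_right ?_ hp
    exact mul_le_mul (hq.le_bound _) (hq.le_bound _) (hq.nonneg _)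
      ((hq.nonneg _).trans (hq.le_bound (implClause u a)))
  · have : prob q m (fun I => ((a :: l).map Prod.fst).Nodup ∧
        ∀ C ∈ bicycleClauses u v a l, ∃ i, I i = C) = 0 := by
      simp only [prob, hnd, false_and, if_false, mul_zero, Finset.sum_const_zero]
    rw [this]
    exact mul_nonneg (by positivity) (mul_nonneg (by positivity) hp)

lemma exists_bicycleClauses_of_not_satInstance {m : ℕ} {I : Fin m → Clause n}
    (h2 : ∀ i, IsTwoClause (I i)) (hI : ¬ SatInstance I) :
    ∃ (s : Fin n) (a : Fin n × Bool) (w : Fin s → Fin n × Bool) (u : Fin (s + 1) × Bool)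
      (j : Fin (s + 1)), ((a :: List.ofFn w).map Prod.fst).Nodup ∧
      ∀ C ∈ bicycleClauses (((Fin.cons a w : Fin (s + 1) → Fin n × Bool) u.1).1, u.2)
        ((Fin.cons a w : Fin (s + 1) → Fin n × Bool) j) a (List.ofFn w), ∃ i, I i = C := by
  rw [satInstance_iff_satisfiable] at hI
  obtain ⟨w, hne, hnd, hch, ⟨u, hu, hu'⟩, v, hv, hv'⟩ := exists_isBicycle (by simpa using h2) hI
  obtain ⟨a, l, rfl⟩ := List.exists_cons_of_ne_nil hne
  have hlen : l.length < n := by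
    have := hnd.length_le_card
    simpa using this
  have hl : List.ofFn l.get = l := List.ofFn_get l
  have hcons : List.ofFn (Fin.cons a l.get : Fin (l.length + 1) → Fin n × Bool) = a :: l := by
    rw [List.ofFn_cons, hl]
  obtain ⟨j, hj⟩ : ∃ j, (Fin.cons a l.get : Fin (l.length + 1) → Fin n × Bool) j = v := by
    rw [← hcons, List.mem_ofFn] at hv
    exact hv
  obtain ⟨k, hk⟩ : ∃ k, ((Fin.cons a l.get : Fin (l.length + 1) → Fin n × Bool) k).1 = u.1 := by
    rw [List.mem_map] at hu
    obtain ⟨x, hx, hxu⟩ := hu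
    rw [← hcons, List.mem_ofFn] at hx
    obtain ⟨k, hk⟩ := hx
    exact ⟨k, by rw [hk, hxu]⟩
  refine ⟨⟨l.length, hlen⟩, a, l.get, (k, u.2), j, ?_, ?_⟩
  · simpa only [hl] using hnd
  · simp only [hl, hj, hk]
    intro C hC
    simp only [bicycleClauses, List.mem_cons] at hC
    suffices C ∈ Finset.univ.image I by simpa using this
    rcases hC with rfl | rfl | hC
    · exact hu' a (by simp)
    · exact hv' _ (List.getLast_mem_getLast? _)
    · exact (forall_mem_pathClauses_iff (P := (· ∈ Finset.univ.image I)) _).2 hch C hC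

lemma IsBalanced.prob_not_satInstance_le (hq : IsBalanced q c) (m : ℕ) :
    prob q m (fun I => ¬ SatInstance I) ≤
      ∑ s : Fin n, 4 * c ^ 2 * ((s : ℝ) + 1) ^ 2 * ((m : ℝ) / n) ^ ((s : ℕ) + 2) / n := by
  refine (prob_mono hq.nonneg fun I hI h =>
    exists_bicycleClauses_of_not_satInstance (fun i => hq.isTwoClause _ (hI i)) h).trans ?_
  refine (prob_exists_le hq.nonneg _).trans (Finset.sum_le_sum fun s _ => ?_)
  refine (prob_exists_le hq.nonneg _).trans ?_
  have hn : (n : ℝ) ≠ 0 := by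
    have := s.pos
    positivity
  calc _ ≤ ∑ a : Fin n × Bool, ∑ w : Fin s → Fin n × Bool, ∑ u : Fin (s + 1) × Bool,
        ∑ j : Fin (s + 1), (m : ℝ) ^ ((s : ℕ) + 2) * ((c / (n : ℝ) ^ 2) ^ 2 *
          ((pathClauses (a :: List.ofFn w)).map q).prod) := by
        refine Finset.sum_le_sum fun a _ => ?_
        refine (prob_exists_le hq.nonneg _).trans (Finset.sum_le_sum fun w _ => ?_)
        refine (prob_exists_le hq.nonneg _).trans (Finset.sum_le_sum fun u _ => ?_)
        refine (prob_exists_le hq.nonneg _).trans (Finset.sum_le_sum fun j _ => ?_)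
        refine (hq.prob_bicycleClauses_le m _ _ a (List.ofFn w) ?_).trans ?_
        · rw [← List.ofFn_cons, List.mem_ofFn]
          exact ⟨j, rfl⟩
        · simp
    _ = _ := by
        simp only [Finset.sum_const, Finset.card_univ, Fintype.card_prod, Fintype.card_fin,
          Fintype.card_bool, nsmul_eq_mul, ← Finset.mul_sum, hq.sum_prod_pathClauses]
        push_cast
        simp only [div_pow, one_pow, pow_add]
        field_simp
        ring

end Balanced

section LongPath

variable {n : ℕ}

/-- The formula `F` contains a path of implications through `K` distinct variables. -/
def HasPath (K : ℕ) (F : Finset (Clause n)) : Prop :=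
  ∃ w : ℕ → Fin n × Bool, Set.InjOn (fun i => (w i).1) (Set.Iio K) ∧
    ∀ i, i + 1 < K → implClause (w i) (w (i + 1)) ∈ F

lemma HasPath.mono {K : ℕ} {F F' : Finset (Clause n)} (h : F ⊆ F') (hF : HasPath K F) :
    HasPath K F' := by
  obtain ⟨w, hw, hw'⟩ := hF
  exact ⟨w, hw, fun i hi => h (hw' i hi)⟩

lemma hasPath_of_isChain {K : ℕ} (hK : 0 < K) {F : Finset (Clause n)}
    {U : List (Fin n × Bool)} (hU : K ≤ U.length) (hnd : (U.map Prod.fst).Nodup)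
    (hch : U.IsChain fun b a => implClause a b ∈ F) : HasPath K F := by
  have hpos : ∀ i, K - 1 - i < U.length := by omega
  refine ⟨fun i => U[K - 1 - i]'(hpos i), ?_, fun i hi => ?_⟩
  · intro i hi j hj hij
    simp only [Set.mem_Iio] at hi hj
    have h : (U.map Prod.fst)[K - 1 - i]'(by simpa using hpos i) =
        (U.map Prod.fst)[K - 1 - j]'(by simpa using hpos j) := by
      simpa only [List.getElem_map] using hij
    rw [hnd.getElem_inj_iff] at h
    omega
  · have h := List.isChain_iff_getElem.1 hch (K - 1 - (i + 1)) (by omega)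
    have e : K - 1 - (i + 1) + 1 = K - 1 - i := by omega
    simpa only [e] using h

variable {q : Clause n → ℝ} {c : ℝ}

lemma IsBalanced.le_sum_implClause_notMem (hq : IsBalanced q c) (a : Fin n × Bool)
    (V : Finset (Fin n)) :
    1 / (n : ℝ) - 2 * V.card * (c / (n : ℝ) ^ 2) ≤
      ∑ b with b.1 ∉ V, q (implClause a b) := by
  have h := Finset.sum_filter_add_sum_filter_not Finset.univ
    (fun b : Fin n × Bool => b.1 ∈ V) (fun b => q (implClause a b))
  rw [hq.sum_implClause] at h
  have hcard : (Finset.univ.filter fun b : Fin n × Bool => b.1 ∈ V).card = V.card * 2 := by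
    have : (Finset.univ.filter fun b : Fin n × Bool => b.1 ∈ V) = V ×ˢ Finset.univ := by
      ext b
      simp
    rw [this, Finset.card_product]
    simp
  have h' := Finset.sum_le_card_nsmul (Finset.univ.filter fun b : Fin n × Bool => b.1 ∈ V)
    (fun b => q (implClause a b)) _ fun b _ => hq.le_bound _
  rw [hcard, nsmul_eq_mul] at h'
  push_cast at h'
  linarith

lemma IsBalanced.le_sum_of_implClause_mem (hq : IsBalanced q c) (V : Finset (Fin n))
    (S : Finset (Fin n × Bool)) (hS : ∀ a ∈ S, a.1 ∈ V) (Z : Finset (Clause n))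
    (hZ : ∀ a ∈ S, ∀ b, b.1 ∉ V → implClause a b ∈ Z) :
    S.card * (1 / (n : ℝ) - 2 * V.card * (c / (n : ℝ) ^ 2)) ≤ ∑ C ∈ Z, q C := by
  have hinj : Set.InjOn (fun x : (Fin n × Bool) × (Fin n × Bool) => implClause x.1 x.2)
      (S ×ˢ Finset.univ.filter fun b : Fin n × Bool => b.1 ∉ V : Finset _) := by
    rintro ⟨a, b⟩ hab ⟨a', b'⟩ hab' h
    simp only [Finset.coe_product, Set.mem_prod, Finset.mem_coe, Finset.mem_filter,
      Finset.mem_univ, true_and] at hab hab'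
    have hb : b ∈ implClause a' b' := by
      rw [← show implClause a b = implClause a' b' from h]
      simp [implClause]
    have ha : neg a ∈ implClause a' b' := by
      rw [← show implClause a b = implClause a' b' from h]
      simp [implClause]
    simp only [implClause, Finset.mem_insert, Finset.mem_singleton] at ha hb
    have hb' : b = b' := by
      rcases hb with rfl | hb
      · exact absurd (hS _ hab'.1) hab.2
      · exact hb
    have ha' : neg a = neg a' := by
      rcases ha with ha | rfl
      · exact ha
      · exact absurd (hS _ hab.1) hab'.2
    rw [← neg_neg a, ha', neg_neg, hb']
  calc _ = ∑ a ∈ S, (1 / (n : ℝ) - 2 * V.card * (c / (n : ℝ) ^ 2)) := by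
        rw [Finset.sum_const, nsmul_eq_mul]
    _ ≤ ∑ a ∈ S, ∑ b with b.1 ∉ V, q (implClause a b) :=
        Finset.sum_le_sum fun a _ => hq.le_sum_implClause_notMem a V
    _ = ∑ C ∈ (S ×ˢ Finset.univ.filter fun b : Fin n × Bool => b.1 ∉ V).image
          (fun x => implClause x.1 x.2), q C := by
        rw [Finset.sum_image hinj, Finset.sum_product]
    _ ≤ ∑ C ∈ Z, q C := by
        refine Finset.sum_le_sum_of_subset_of_nonneg ?_ fun C _ _ => hq.nonneg C
        intro C hC
        obtain ⟨⟨a, b⟩, hab, rfl⟩ := Finset.mem_image.1 hC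
        rw [Finset.mem_product, Finset.mem_filter] at hab
        exact hZ a hab.1 b hab.2.2

/-- The failure probability of depth-first search. The state consists of the set `V` of visited
variables, the current path `U` (last literal first), the set `S` of exhausted literals, the
clauses `Z` known to be absent and the clauses `D` already found; `d` variables may still be
visited and `k` clauses have not been located yet. -/
lemma IsBalanced.prob_not_hasPath_aux (hq : IsBalanced q c) {K v m : ℕ} (hK : 0 < K)
    (hv : v ≤ n) {A β y M : ℝ} (hA : 0 ≤ A) (hβ : 0 ≤ β) (hy : 1 ≤ y)
    (hstep : ∀ C, Real.exp (-((A - β) * q C)) + m * q C / y ≤ 1)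
    (hfac : 0 ≤ 1 / (n : ℝ) - 2 * v * (c / (n : ℝ) ^ 2))
    (hM : M ≤ ((v : ℝ) - K) * (1 / (n : ℝ) - 2 * v * (c / (n : ℝ) ^ 2)))
    (d k : ℕ) (V : Finset (Fin n)) (U : List (Fin n × Bool)) (S : Finset (Fin n × Bool))
    (Z D : Finset (Clause n)) (hVd : V.card + d = v) (hk : A + d ≤ k) (hkm : k ≤ m)
    (hnd : (U.map Prod.fst).Nodup) (hch : U.IsChain fun b a => implClause a b ∈ D)
    (hUV : ∀ x ∈ U, x.1 ∈ V) (hSV : ∀ x ∈ S, x.1 ∈ V)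
    (hV : ∀ x ∈ V, x ∈ U.map Prod.fst ∨ x ∈ S.image Prod.fst)
    (hZ : ∀ a ∈ S, ∀ b, b.1 ∉ V → implClause a b ∈ Z) :
    prob q k (fun J => (∀ i, J i ∉ Z) ∧ ¬ HasPath K (D ∪ Finset.univ.image J)) ≤
      y ^ d * Real.exp (-(A * ∑ C ∈ Z, q C) - β * (M - ∑ C ∈ Z, q C)) := by
  induction d generalizing k V U S Z D with
  | zero =>
    by_cases hKU : K ≤ U.length
    · have hp : ∀ J : Fin k → Clause n, HasPath K (D ∪ Finset.univ.image J) := fun J =>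
        (hasPath_of_isChain hK hKU hnd hch).mono Finset.subset_union_left
      have : prob q k (fun J => (∀ i, J i ∉ Z) ∧ ¬ HasPath K (D ∪ Finset.univ.image J)) = 0 := by
        simp only [prob, hp, not_true_eq_false, and_false, if_false, mul_zero,
          Finset.sum_const_zero]
      rw [this]
      positivity
    · refine (prob_mono hq.nonneg fun J _ h => h.1).trans
        ((prob_avoid_le hq.nonneg hq.sum_eq_one k Z).trans ?_)
      rw [pow_zero, one_mul, Real.exp_le_exp]
      have hVv : V.card = v := by simpa using hVd
      have hS := hq.le_sum_of_implClause_mem V S hSV Z hZ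
      rw [hVv] at hS
      have hcard : (v : ℝ) ≤ K + S.card := by
        have h1 : V ⊆ (U.map Prod.fst).toFinset ∪ S.image Prod.fst := by
          intro x hx
          simpa using hV x hx
        have h2 := (Finset.card_le_card h1).trans (Finset.card_union_le _ _)
        have h3 := List.toFinset_card_le (U.map Prod.fst)
        have h4 : (S.image Prod.fst).card ≤ S.card := Finset.card_image_le
        rw [List.length_map] at h3
        have : v ≤ K + S.card := by omega
        exact_mod_cast this
      have hMZ : M ≤ ∑ C ∈ Z, q C :=
        hM.trans (le_trans (mul_le_mul_of_nonneg_right (by linarith) hfac) hS)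
      have hZ0 : 0 ≤ ∑ C ∈ Z, q C := Finset.sum_nonneg fun C _ => hq.nonneg C
      have hAk : A ≤ k := by simpa using hk
      have := mul_le_mul_of_nonneg_right hAk hZ0
      have := mul_nonneg hβ (sub_nonneg.2 hMZ)
      nlinarith
  | succ d ihd =>
    induction hN : U.length + Zᶜ.card using Nat.strong_induction_on generalizing U S Z with
    | _ N ihN =>
    push_cast at hk
    cases U with
    | nil =>
      obtain ⟨x, hx⟩ : ∃ x, x ∉ V := by
        by_contra! hall
        have : V = Finset.univ := Finset.eq_univ_iff_forall.2 hall
        rw [this, Finset.card_univ, Fintype.card_fin] at hVd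
        omega
      refine (ihd k (insert x V) [(x, true)] S Z D ?_ (by linarith) hkm (by simp) (by simp)
        (by simp) (fun a ha => Finset.mem_insert_of_mem (hSV a ha)) ?_ ?_).trans ?_
      · rw [Finset.card_insert_of_notMem hx]
        omega
      · intro z hz
        rcases Finset.mem_insert.1 hz with rfl | hz
        · simp
        · rcases hV z hz with h | h
          · simp at h
          · exact Or.inr h
      · exact fun a ha b hb => hZ a ha b fun h => hb (Finset.mem_insert_of_mem h)
      · refine mul_le_mul_of_nonneg_right ?_ (Real.exp_pos _).le
        exact pow_le_pow_right₀ hy (Nat.le_succ d)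
    | cons a U =>
      by_cases hb : ∃ b, b.1 ∉ V ∧ implClause a b ∉ Z
      · obtain ⟨b, hbV, hbZ⟩ := hb
        set C := implClause a b with hC
        obtain ⟨k, rfl⟩ : ∃ k', k = k' + 1 := by
          refine Nat.exists_eq_succ_of_ne_zero ?_
          rintro rfl
          push_cast at hk
          have : (0 : ℝ) ≤ d := by positivity
          linarith
        have hneg := ihN _ ?_ (a :: U) S (insert C Z) hnd hch hUV hSV hV
          (fun a ha b hb => Finset.mem_insert_of_mem (hZ a ha b hb)) rfl
        · have hpos := ihd k (insert b.1 V) (b :: a :: U) S Z (insert C D) (by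
              rw [Finset.card_insert_of_notMem hbV]
              omega) (by push_cast at hk; linarith) (by omega) (by
              rw [List.map_cons, List.nodup_cons]
              refine ⟨fun h => hbV ?_, hnd⟩
              obtain ⟨z, hz, hzb⟩ := List.mem_map.1 h
              rw [← hzb]
              exact hUV z hz) (by
              rw [List.isChain_cons_cons]
              exact ⟨Finset.mem_insert_self _ _, hch.imp fun _ _ h => Finset.mem_insert_of_mem h⟩)
            (fun z hz => by
              rcases List.mem_cons.1 hz with rfl | hz
              · exact Finset.mem_insert_self _ _
              · exact Finset.mem_insert_of_mem (hUV z hz))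
            (fun z hz => Finset.mem_insert_of_mem (hSV z hz))
            (fun z hz => by
              rcases Finset.mem_insert.1 hz with rfl | hz
              · simp
              · rcases hV z hz with h | h
                · exact Or.inl (List.mem_cons_of_mem _ h)
                · exact Or.inr h)
            (fun a ha b hb => hZ a ha b fun h => hb (Finset.mem_insert_of_mem h))
          have hsplit : prob q (k + 1)
              (fun J => (∀ i, J i ∉ Z) ∧ ¬ HasPath K (D ∪ Finset.univ.image J)) ≤
              prob q (k + 1)
                (fun J => (∀ i, J i ∉ insert C Z) ∧ ¬ HasPath K (D ∪ Finset.univ.image J)) +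
              (k + 1 : ℕ) * (q C * prob q k (fun J => (∀ i, J i ∉ Z) ∧
                ¬ HasPath K (insert C D ∪ Finset.univ.image J))) := by
            refine le_trans ?_ (add_le_add le_rfl (prob_exists_eq_le hq.nonneg C _))
            refine le_trans ?_ (prob_or_le hq.nonneg _ _)
            refine prob_mono hq.nonneg fun J _ hJ => ?_
            by_cases hJC : ∃ i, J i = C
            · obtain ⟨i, hi⟩ := hJC
              refine Or.inr ⟨i, hi, fun j => hJ.1 _, fun hp => hJ.2 (hp.mono ?_)⟩
              intro E hE
              simp only [Finset.mem_union, Finset.mem_insert, Finset.mem_image, Finset.mem_univ,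
                true_and] at hE ⊢
              rcases hE with (rfl | hE) | ⟨j, rfl⟩
              · exact Or.inr ⟨i, hi⟩
              · exact Or.inl hE
              · exact Or.inr ⟨_, rfl⟩
            · push Not at hJC
              refine Or.inl ⟨fun i hi => ?_, hJ.2⟩
              rcases Finset.mem_insert.1 hi with h | h
              · exact hJC i h
              · exact hJ.1 i h
          rw [Finset.sum_insert hbZ] at hneg
          refine hsplit.trans ((add_le_add hneg (mul_le_mul_of_nonneg_left
            (mul_le_mul_of_nonneg_left hpos (hq.nonneg C)) (by positivity))).trans ?_)
          set E := Real.exp (-(A * ∑ C ∈ Z, q C) - β * (M - ∑ C ∈ Z, q C)) with hE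
          have hE' : Real.exp (-(A * (q C + ∑ C ∈ Z, q C)) - β * (M - (q C + ∑ C ∈ Z, q C))) =
              E * Real.exp (-((A - β) * q C)) := by
            rw [hE, ← Real.exp_add]
            congr 1
            ring
          have hkm' : ((k + 1 : ℕ) : ℝ) ≤ m := by exact_mod_cast hkm
          have hy0 : 0 < y := by linarith
          have hE0 : 0 ≤ E := (Real.exp_pos _).le
          rw [hE']
          calc _ ≤ y ^ (d + 1) * (E * Real.exp (-((A - β) * q C))) +
                (m : ℝ) * (q C * (y ^ d * E)) := by
                gcongr
                exact mul_nonneg (hq.nonneg C) (by positivity)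
            _ = y ^ (d + 1) * E * (Real.exp (-((A - β) * q C)) + m * q C / y) := by
                rw [pow_succ]
                field_simp
            _ ≤ y ^ (d + 1) * E * 1 := by
                gcongr
                exact hstep C
            _ = _ := mul_one _
        · rw [← hN]
          have : (insert C Z)ᶜ ⊂ Zᶜ := by
            rw [Finset.compl_ssubset_compl]
            exact Finset.ssubset_insert hbZ
          have := Finset.card_lt_card this
          omega
      · push Not at hb
        rw [List.map_cons, List.nodup_cons] at hnd
        refine ihN _ ?_ U (insert a S) Z hnd.2 hch.tail
          (fun z hz => hUV z (List.mem_cons_of_mem _ hz)) ?_ ?_ ?_ rfl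
        · rw [← hN, List.length_cons]
          omega
        · intro z hz
          rcases Finset.mem_insert.1 hz with rfl | hz
          · exact hUV _ (by simp)
          · exact hSV z hz
        · intro z hz
          rcases hV z hz with h | h
          · rcases List.mem_cons.1 h with rfl | h
            · right
              simp
            · exact Or.inl h
          · right
            rw [Finset.image_insert]
            exact Finset.mem_insert_of_mem h
        · intro z hz b hbV
          rcases Finset.mem_insert.1 hz with rfl | hz
          · exact hb b hbV
          · exact hZ z hz b hbV

lemma IsBalanced.prob_not_hasPath_le (hq : IsBalanced q c) {K v m : ℕ} (hK : 0 < K)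
    (hv : v ≤ n) (hvm : v ≤ m) {β y : ℝ} (hβ : 0 ≤ β) (hy : 1 ≤ y)
    (hstep : ∀ C, Real.exp (-(((m : ℝ) - v - β) * q C)) + m * q C / y ≤ 1)
    (hfac : 0 ≤ 1 / (n : ℝ) - 2 * v * (c / (n : ℝ) ^ 2)) :
    prob q m (fun J => ¬ HasPath K (Finset.univ.image J)) ≤
      y ^ v * Real.exp
        (-(β * (((v : ℝ) - K) * (1 / (n : ℝ) - 2 * v * (c / (n : ℝ) ^ 2))))) := by
  have hA : 0 ≤ (m : ℝ) - v := sub_nonneg.2 (by exact_mod_cast hvm)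
  have h := hq.prob_not_hasPath_aux hK hv hA hβ hy hstep hfac le_rfl v m ∅ [] ∅ ∅ ∅
    (by simp) (by simp) le_rfl (by simp) (by simp) (by simp) (by simp) (by simp) (by simp)
  simpa using h

end LongPath

section Spread

variable {n : ℕ}

/-- Along every path of implications of positive weight, a two-clause on the path has weight at
least `κ`, possibly after replacing its last literal by the successor. -/
def IsSpread (q : Clause n → ℝ) (κ : ℝ) : Prop :=
  ∀ (w : ℕ → Fin n × Bool) (K : ℕ), Set.InjOn (fun i => (w i).1) (Set.Iio K) →
    (∀ i, i + 1 < K → q (implClause (w i) (w (i + 1))) ≠ 0) →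
    ∀ i j, j < i → i + 1 < K → κ ≤ q {w j, w i} ∨ κ ≤ q {w j, w (i + 1)}

variable {q : Clause n → ℝ} {c κ : ℝ}

lemma IsSpread.exists_clauses (hs : IsSpread q κ) {h : ℕ} {w : ℕ → Fin n × Bool}
    (hw : Set.InjOn (fun i => (w i).1) (Set.Iio (3 * h)))
    (hq : ∀ i, i + 1 < 3 * h → q (implClause (w i) (w (i + 1))) ≠ 0) :
    ∃ Z : Finset (Clause n), (h : ℝ) ^ 2 * κ ≤ ∑ C ∈ Z, q C ∧
      ∀ C ∈ Z, ∃ i j, i < 3 * h ∧ j < 3 * h ∧ C = {w i, w j} := by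
  have hex : ∀ x : ℕ × ℕ, ∃ e, e < 2 ∧
      (x ∈ Finset.range h ×ˢ Finset.range h → κ ≤ q {w x.1, w (h + 2 * x.2 + e)}) := by
    rintro ⟨j, i⟩
    by_cases hx : (j, i) ∈ Finset.range h ×ˢ Finset.range h
    · have hx' := hx
      simp only [Finset.mem_product, Finset.mem_range] at hx'
      rcases hs w (3 * h) hw hq (h + 2 * i) j (by omega) (by omega) with h0 | h1
      · exact ⟨0, by norm_num, fun _ => h0⟩
      · exact ⟨1, by norm_num, fun _ => h1⟩
    · exact ⟨0, by norm_num, fun hx' => absurd hx' hx⟩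
  choose e he hκ using hex
  set f : ℕ × ℕ → Clause n := fun x => {w x.1, w (h + 2 * x.2 + e x)} with hf
  have hw' : ∀ i j, i < 3 * h → j < 3 * h → w i = w j → i = j := fun i j hi hj hij =>
    hw (Set.mem_Iio.2 hi) (Set.mem_Iio.2 hj) (congrArg Prod.fst hij)
  have hinj : Set.InjOn f (Finset.range h ×ˢ Finset.range h : Finset (ℕ × ℕ)) := by
    rintro ⟨j, i⟩ hx ⟨j', i'⟩ hx' hxx
    simp only [Finset.coe_product, Finset.coe_range, Set.mem_prod, Set.mem_Iio] at hx hx'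
    have e1 := he (j, i)
    have e2 := he (j', i')
    have h1 : w j ∈ f (j', i') := by
      rw [← hxx]
      simp [hf]
    have h2 : w (h + 2 * i + e (j, i)) ∈ f (j', i') := by
      rw [← hxx]
      simp [hf]
    simp only [hf, Finset.mem_insert, Finset.mem_singleton] at h1 h2
    have hj : j = j' := by
      rcases h1 with h1 | h1
      · exact hw' _ _ (by omega) (by omega) h1
      · have := hw' _ _ (by omega) (by omega) h1
        omega
    have hi : i = i' := by
      rcases h2 with h2 | h2
      · have := hw' _ _ (by omega) (by omega) h2
        omega
      · have := hw' _ _ (by omega) (by omega) h2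
        omega
    rw [hj, hi]
  refine ⟨(Finset.range h ×ˢ Finset.range h).image f, ?_, ?_⟩
  · rw [Finset.sum_image hinj]
    have := Finset.card_nsmul_le_sum (Finset.range h ×ˢ Finset.range h) (fun x => q (f x)) κ
      fun x hx => hκ x hx
    rw [Finset.card_product, Finset.card_range, nsmul_eq_mul] at this
    push_cast at this
    rwa [pow_two]
  · intro C hC
    obtain ⟨⟨j, i⟩, hx, rfl⟩ := Finset.mem_image.1 hC
    simp only [Finset.mem_product, Finset.mem_range] at hx
    have := he (j, i)
    exact ⟨j, h + 2 * i + e (j, i), by omega, by omega, rfl⟩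

lemma eq_of_forall_implClause {w : ℕ → Fin n × Bool} {K : ℕ} {σ : Fin n → Bool}
    (hσ : ∀ i, i + 1 < K → SatClause σ (implClause (w i) (w (i + 1)))) {i j : ℕ} (hij : i ≤ j)
    (hj : j < K) (hi : σ (w i).1 = (w i).2) : σ (w j).1 = (w j).2 := by
  induction j, hij using Nat.le_induction with
  | base => exact hi
  | succ j hij ih =>
    obtain ⟨l, hl, hl'⟩ := hσ j hj
    simp only [implClause, Finset.mem_insert, Finset.mem_singleton] at hl
    rcases hl with rfl | rfl
    · rw [neg_fst, ih (by omega)] at hl'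
      simp [neg] at hl'
    · exact hl'

lemma IsBalanced.prob_satInstance_append_le (hq : IsBalanced q c) (hs : IsSpread q κ) {h k l : ℕ}
    {I : Fin k → Clause n} (hI : ∀ i, q (I i) ≠ 0)
    (hp : HasPath (6 * h) (Finset.univ.image I)) :
    prob q l (fun J => SatInstance (Fin.append I J)) ≤
      2 * Real.exp (-(l * ((h : ℝ) ^ 2 * κ))) := by
  obtain ⟨w, hw, hwI⟩ := hp
  have hwq : ∀ i, i + 1 < 6 * h → q (implClause (w i) (w (i + 1))) ≠ 0 := by
    intro i hi
    obtain ⟨j, -, hj⟩ := Finset.mem_image.1 (hwI i hi)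
    rw [← hj]
    exact hI j
  obtain ⟨Z, hZ, hZw⟩ := hs.exists_clauses (h := h) (w := w)
    (hw.mono (Set.Iio_subset_Iio (by omega))) fun i hi => hwq i (by omega)
  obtain ⟨Z', hZ', hZw'⟩ := hs.exists_clauses (h := h) (w := fun i => neg (w (6 * h - 1 - i)))
    (by
      intro i hi j hj hij
      simp only [Set.mem_Iio] at hi hj
      have := hw (Set.mem_Iio.2 (by omega : 6 * h - 1 - i < 6 * h))
        (Set.mem_Iio.2 (by omega : 6 * h - 1 - j < 6 * h)) hij
      omega)
    (by
      intro i hi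
      rw [implClause_neg]
      have := hwq (6 * h - 1 - (i + 1)) (by omega)
      rwa [show 6 * h - 1 - (i + 1) + 1 = 6 * h - 1 - i by omega] at this)
  have havoid : ∀ Z : Finset (Clause n), (h : ℝ) ^ 2 * κ ≤ ∑ C ∈ Z, q C →
      prob q l (fun J => ∀ i, J i ∉ Z) ≤ Real.exp (-(l * ((h : ℝ) ^ 2 * κ))) := fun Z hZ =>
    (prob_avoid_le hq.nonneg hq.sum_eq_one l Z).trans
      (Real.exp_le_exp.2 (neg_le_neg (mul_le_mul_of_nonneg_left hZ (Nat.cast_nonneg l))))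
  calc _ ≤ prob q l (fun J => (∀ i, J i ∉ Z) ∨ ∀ i, J i ∉ Z') := by
        refine prob_mono hq.nonneg fun J _ ⟨σ, hσ⟩ => ?_
        by_contra! hJ
        obtain ⟨⟨i, hi⟩, i', hi'⟩ := hJ
        have hσI : ∀ i, i + 1 < 6 * h → SatClause σ (implClause (w i) (w (i + 1))) := by
          intro i hi
          obtain ⟨j, -, hj⟩ := Finset.mem_image.1 (hwI i hi)
          rw [← hj]
          simpa using hσ (Fin.castAdd l j)
        have h1 : SatClause σ (J i) := by simpa using hσ (Fin.natAdd k i)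
        have h2 : SatClause σ (J i') := by simpa using hσ (Fin.natAdd k i')
        obtain ⟨a, b, ha, hb, hab⟩ := hZw _ hi
        obtain ⟨a', b', ha', hb', hab'⟩ := hZw' _ hi'
        have h3 : ∃ x, x < 3 * h ∧ σ (w x).1 = (w x).2 := by
          obtain ⟨z, hz, hzσ⟩ := h1
          rw [hab] at hz
          simp only [Finset.mem_insert, Finset.mem_singleton] at hz
          rcases hz with rfl | rfl
          · exact ⟨a, ha, hzσ⟩
          · exact ⟨b, hb, hzσ⟩
        have h4 : ∃ y, y < 3 * h ∧ σ (w (6 * h - 1 - y)).1 = !(w (6 * h - 1 - y)).2 := by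
          obtain ⟨z, hz, hzσ⟩ := h2
          rw [hab'] at hz
          simp only [Finset.mem_insert, Finset.mem_singleton] at hz
          rcases hz with rfl | rfl
          · exact ⟨a', ha', hzσ⟩
          · exact ⟨b', hb', hzσ⟩
        obtain ⟨x, hx, hxσ⟩ := h3
        obtain ⟨y, hy, hyσ⟩ := h4
        rw [eq_of_forall_implClause hσI (by omega) (by omega) hxσ] at hyσ
        simp at hyσ
    _ ≤ _ := (prob_or_le hq.nonneg _ _).trans
        (by linarith [havoid Z hZ, havoid Z' hZ'])

/-- If a path of implications is found with high probability among the first `k` clauses, then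
the remaining `l` clauses make the instance unsatisfiable. -/
lemma IsBalanced.prob_satInstance_le (hq : IsBalanced q c) (hs : IsSpread q κ) (h k l : ℕ) :
    prob q (k + l) SatInstance ≤
      prob q k (fun I => ¬ HasPath (6 * h) (Finset.univ.image I)) +
        2 * Real.exp (-(l * ((h : ℝ) ^ 2 * κ))) :=
  prob_append_le hq.nonneg hq.sum_eq_one _ _
    (fun _ hI hp => hq.prob_satInstance_append_le hs hI (not_not.1 hp)) (by positivity)

end Spread

section RegularClauses

variable {n : ℕ}

/-- A set of two-clauses in which every literal occurs exactly `d` times. -/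
structure IsRegular (Ω : Finset (Clause n)) (d : ℕ) : Prop where
  isTwoClause : ∀ C ∈ Ω, IsTwoClause C
  card_filter : ∀ a : Fin n × Bool, (Finset.univ.filter fun b => {a, b} ∈ Ω).card = d

variable {Ω : Finset (Clause n)} {d : ℕ}

lemma IsRegular.card_eq (hΩ : IsRegular Ω d) : Ω.card = n * d := by
  have h1 : (Finset.univ.filter fun x : (Fin n × Bool) × (Fin n × Bool) =>
      ({x.1, x.2} : Clause n) ∈ Ω).card = n * 2 * d := by
    have h : (Finset.univ.filter fun x : (Fin n × Bool) × (Fin n × Bool) =>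
        ({x.1, x.2} : Clause n) ∈ Ω).card =
        ∑ a : Fin n × Bool, (Finset.univ.filter fun b => ({a, b} : Clause n) ∈ Ω).card := by
      simp only [Finset.card_filter]
      exact Fintype.sum_prod_type _
    rw [h]
    simp [hΩ.card_filter]
  have h2 := Finset.card_eq_sum_card_fiberwise (t := Ω)
    (s := Finset.univ.filter fun x : (Fin n × Bool) × (Fin n × Bool) =>
      ({x.1, x.2} : Clause n) ∈ Ω) (f := fun x => {x.1, x.2}) (by
        intro x hx
        simpa using hx)
  rw [h1, Finset.sum_congr rfl (g := fun _ => 2), Finset.sum_const, smul_eq_mul] at h2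
  · linarith
  · intro C hC
    obtain ⟨a, b, hab, rfl⟩ := hΩ.isTwoClause C hC
    have hne : a ≠ b := fun h => hab (congrArg Prod.fst h)
    rw [← Finset.card_pair (a := (a, b)) (b := (b, a)) (by simp [hne])]
    congr 1
    ext ⟨x, y⟩
    simp only [Finset.mem_filter, Finset.mem_univ, true_and, Finset.mem_insert,
      Finset.mem_singleton, Prod.mk.injEq]
    constructor
    · rintro ⟨-, h⟩
      have hx : x ∈ ({a, b} : Clause n) := by simp [← h]
      have hy : y ∈ ({a, b} : Clause n) := by simp [← h]
      have ha : a ∈ ({x, y} : Clause n) := by simp [h]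
      have hb : b ∈ ({x, y} : Clause n) := by simp [h]
      simp only [Finset.mem_insert, Finset.mem_singleton] at hx hy ha hb
      grind
    · rintro (⟨rfl, rfl⟩ | ⟨rfl, rfl⟩)
      · exact ⟨hC, rfl⟩
      · exact ⟨by rwa [Finset.pair_comm], Finset.pair_comm _ _⟩

lemma IsRegular.sum_implClause (hΩ : IsRegular Ω d) (hd : 0 < d) (a : Fin n × Bool) :
    ∑ b, (if implClause a b ∈ Ω then (Ω.card : ℝ)⁻¹ else 0) = 1 / n := by
  have h : (Finset.univ.filter fun b => implClause a b ∈ Ω).card = d := hΩ.card_filter (neg a)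
  rw [← Finset.sum_filter, Finset.sum_const, nsmul_eq_mul, hΩ.card_eq, h]
  have : (d : ℝ) ≠ 0 := by positivity
  push_cast
  rw [mul_inv, mul_comm, mul_assoc, inv_mul_cancel₀ this, mul_one, one_div]

lemma IsRegular.sum_eq_one (hΩ : IsRegular Ω d) (hn : 0 < n) (hd : 0 < d) :
    ∑ C, (if C ∈ Ω then (Ω.card : ℝ)⁻¹ else 0) = 1 := by
  have : (Ω.card : ℝ) ≠ 0 := by
    rw [hΩ.card_eq]
    positivity
  rw [Finset.sum_ite_mem, Finset.univ_inter, Finset.sum_const, nsmul_eq_mul, mul_inv_cancel₀ this]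

end RegularClauses

section Communities

lemma card_comm_eq {B t : ℕ} (u : Fin (B * t)) :
    (Finset.univ.filter fun v : Fin (B * t) => comm t v = comm t u).card = t := by
  have ht : 0 < t := by
    refine Nat.pos_of_ne_zero ?_
    rintro rfl
    exact absurd u.2 (by simp)
  have hu : comm t u < B := Nat.div_lt_of_lt_mul (by simp [mul_comm])
  have h : (Finset.univ.filter fun v : Fin (B * t) => comm t v = comm t u).map Fin.valEmbedding =
      Finset.Ico (comm t u * t) ((comm t u + 1) * t) := by
    ext x
    simp only [Finset.mem_map, Finset.mem_filter, Finset.mem_univ, true_and,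
      Fin.valEmbedding_apply, Finset.mem_Ico]
    constructor
    · rintro ⟨v, hv, rfl⟩
      rw [← hv]
      exact ⟨Nat.div_mul_le_self _ _, Nat.lt_mul_of_div_lt (Nat.lt_succ_self _) ht⟩
    · rintro ⟨h1, h2⟩
      refine ⟨⟨x, h2.trans_le (Nat.mul_le_mul_right t hu)⟩, ?_, rfl⟩
      exact Nat.div_eq_of_lt_le h1 h2
  rw [← Finset.card_map Fin.valEmbedding, h, Nat.card_Ico, add_mul, one_mul,
    Nat.add_sub_cancel_left]

variable {n h : ℕ}

lemma vars_pair (a b : Fin n × Bool) : vars ({a, b} : Clause n) = {a.1, b.1} := by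
  simp [vars, Finset.image_insert]

lemma proper_pair {a b : Fin n × Bool} (hab : a.1 ≠ b.1) : Proper ({a, b} : Clause n) := by
  rw [Proper, vars_pair, Finset.card_pair hab, Finset.card_pair fun e => hab (congrArg Prod.fst e)]

lemma comm_lt (v : Fin n) : comm h v < n := (Nat.div_le_self _ _).trans_lt v.2

lemma clauseType_pair_of_eq {a b : Fin n × Bool} (hab : a.1 ≠ b.1)
    (hc : comm h a.1 = comm h b.1) : clauseType h ({a, b} : Clause n) = {2} := by
  have hf : ∀ i, (({a.1, b.1} : Finset (Fin n)).filter fun v => comm h v = i).card =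
      if i = comm h a.1 then 2 else 0 := by
    intro i
    split_ifs with hi
    · rw [Finset.filter_true_of_mem, Finset.card_pair hab]
      simp [hi, hc]
    · rw [Finset.filter_false_of_mem, Finset.card_empty]
      simp only [Finset.mem_insert, Finset.mem_singleton, forall_eq_or_imp, forall_eq, ← hc,
        and_self]
      exact fun e => hi e.symm
  have hr : (Finset.range n).filter (fun i => i = comm h a.1) = {comm h a.1} := by
    ext i
    simp only [Finset.mem_filter, Finset.mem_range, Finset.mem_singleton, and_iff_right_iff_imp]
    rintro rfl
    exact comm_lt _
  rw [clauseType, vars_pair, Multiset.filter_map]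
  simp only [Function.comp_def, hf]
  simp only [ne_eq, ite_eq_right_iff, OfNat.ofNat_ne_zero, imp_false, not_not]
  rw [← Finset.filter_val, hr]
  simp

lemma clauseType_pair_of_ne {a b : Fin n × Bool} (hc : comm h a.1 ≠ comm h b.1) :
    clauseType h ({a, b} : Clause n) = {1, 1} := by
  have hf : ∀ i, (({a.1, b.1} : Finset (Fin n)).filter fun v => comm h v = i).card =
      if i = comm h a.1 ∨ i = comm h b.1 then 1 else 0 := by
    intro i
    by_cases h1 : i = comm h a.1
    · have : ¬ comm h b.1 = i := fun e => hc (h1.symm.trans e.symm)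
      simp [Finset.filter_insert, Finset.filter_singleton, h1, Ne.symm hc]
    · by_cases h2 : i = comm h b.1
      · simp [Finset.filter_insert, Finset.filter_singleton, h2, hc]
      · simp [Finset.filter_insert, Finset.filter_singleton, h1, h2, Ne.symm h1, Ne.symm h2]
  have hr : (Finset.range n).filter (fun i => i = comm h a.1 ∨ i = comm h b.1) =
      {comm h a.1, comm h b.1} := by
    ext i
    simp only [Finset.mem_filter, Finset.mem_range, Finset.mem_insert, Finset.mem_singleton,
      and_iff_right_iff_imp]
    rintro (rfl | rfl) <;> exact comm_lt _
  rw [clauseType, vars_pair, Multiset.filter_map]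
  simp only [Function.comp_def, hf]
  simp only [ne_eq, ite_eq_right_iff, one_ne_zero, imp_false, not_not]
  rw [← Finset.filter_val, hr, Finset.insert_val_of_notMem (by simpa using hc)]
  simp

lemma mem_clausesOfType_two_iff {a b : Fin n × Bool} (hab : a.1 ≠ b.1) :
    ({a, b} : Clause n) ∈ clausesOfType n h {2} ↔ comm h a.1 = comm h b.1 := by
  simp only [clausesOfType, Finset.mem_filter, Finset.mem_univ, true_and, proper_pair hab]
  by_cases hc : comm h a.1 = comm h b.1
  · simp [clauseType_pair_of_eq hab hc, hc]
  · rw [clauseType_pair_of_ne hc]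
    simp only [hc, iff_false]
    exact fun e => by simpa using congrArg Multiset.card e

lemma mem_clausesOfType_one_one_iff {a b : Fin n × Bool} (hab : a.1 ≠ b.1) :
    ({a, b} : Clause n) ∈ clausesOfType n h {1, 1} ↔ comm h a.1 ≠ comm h b.1 := by
  simp only [clausesOfType, Finset.mem_filter, Finset.mem_univ, true_and, proper_pair hab]
  by_cases hc : comm h a.1 = comm h b.1
  · rw [clauseType_pair_of_eq hab hc]
    simp only [hc, ne_eq, not_true_eq_false, iff_false]
    exact fun e => by simpa using congrArg Multiset.card e
  · simp [clauseType_pair_of_ne hc, hc]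

lemma sum_clauseType (C : Clause n) : (clauseType h C).sum = (vars C).card := by
  have h0 : ∀ s : Multiset ℕ, (s.filter fun c => c ≠ 0).sum = s.sum := by
    intro s
    induction s using Multiset.induction_on with
    | empty => rfl
    | cons a s ih => by_cases ha : a = 0 <;> simp_all
  rw [clauseType, h0]
  exact (Finset.card_eq_sum_card_fiberwise fun v _ => by simpa using comm_lt v).symm

lemma isTwoClause_of_mem_clausesOfType {K : Multiset ℕ} (hK : K.sum = 2) {C : Clause n}
    (hC : C ∈ clausesOfType n h K) : IsTwoClause C := by
  simp only [clausesOfType, Finset.mem_filter, Finset.mem_univ, true_and] at hC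
  obtain ⟨hp, rfl⟩ := hC
  rw [sum_clauseType] at hK
  obtain ⟨a, b, hab, rfl⟩ := Finset.card_eq_two.1 (hp.trans hK)
  refine ⟨a, b, fun e => ?_, rfl⟩
  rw [vars_pair, e] at hK
  simp at hK

lemma card_filter_fst_mem (S : Finset (Fin n)) :
    (Finset.univ.filter fun b : Fin n × Bool => b.1 ∈ S).card = S.card * 2 := by
  have : (Finset.univ.filter fun b : Fin n × Bool => b.1 ∈ S) = S ×ˢ Finset.univ := by
    ext b
    simp
  rw [this, Finset.card_product]
  simp

lemma isRegular_two (B t : ℕ) : IsRegular (clausesOfType (B * t) t {2}) (2 * (t - 1)) where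
  isTwoClause _ hC := isTwoClause_of_mem_clausesOfType (by simp) hC
  card_filter a := by
    have h : ∀ b : Fin (B * t) × Bool, ({a, b} : Clause (B * t)) ∈ clausesOfType (B * t) t {2} ↔
        b.1 ∈ (Finset.univ.filter fun v : Fin (B * t) => comm t v = comm t a.1).erase a.1 := by
      intro b
      simp only [Finset.mem_erase, Finset.mem_filter, Finset.mem_univ, true_and]
      constructor
      · intro hb
        have hab : a.1 ≠ b.1 := by
          have := (isTwoClause_of_mem_clausesOfType (by simp) hb)
          rw [← neg_neg a] at this
          exact this.fst_ne
        exact ⟨hab.symm, ((mem_clausesOfType_two_iff hab).1 hb).symm⟩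
      · rintro ⟨hab, hc⟩
        exact (mem_clausesOfType_two_iff hab.symm).2 hc.symm
    simp only [h]
    rw [card_filter_fst_mem, Finset.card_erase_of_mem (by simp),
      card_comm_eq, mul_comm]

lemma isRegular_one_one (B t : ℕ) :
    IsRegular (clausesOfType (B * t) t {1, 1}) (2 * (B * t - t)) where
  isTwoClause _ hC := isTwoClause_of_mem_clausesOfType (by simp) hC
  card_filter a := by
    have h : ∀ b : Fin (B * t) × Bool, ({a, b} : Clause (B * t)) ∈ clausesOfType (B * t) t {1, 1} ↔
        b.1 ∈ (Finset.univ.filter fun v : Fin (B * t) => comm t v = comm t a.1)ᶜ := by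
      intro b
      simp only [Finset.mem_compl, Finset.mem_filter, Finset.mem_univ, true_and]
      constructor
      · intro hb
        have hab : a.1 ≠ b.1 := by
          have := (isTwoClause_of_mem_clausesOfType (by simp) hb)
          rw [← neg_neg a] at this
          exact this.fst_ne
        exact fun e => (mem_clausesOfType_one_one_iff hab).1 hb e.symm
      · intro hc
        have hab : a.1 ≠ b.1 := fun e => hc (by rw [e])
        exact (mem_clausesOfType_one_one_iff hab).2 fun e => hc e.symm
    simp only [h]
    rw [card_filter_fst_mem, Finset.card_compl,
      card_comm_eq, mul_comm, Fintype.card_fin]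

end Communities

section Mixture

variable {B t : ℕ} {p : ℝ}

lemma clauseProb_mixture (C : Clause (B * t)) :
    clauseProb (B * t) t ![p, 1 - p] ![({1, 1} : Multiset ℕ), {2}] C =
      p * (if C ∈ clausesOfType (B * t) t {1, 1} then
        ((clausesOfType (B * t) t {1, 1}).card : ℝ)⁻¹ else 0) +
      (1 - p) * (if C ∈ clausesOfType (B * t) t {2} then
        ((clausesOfType (B * t) t {2}).card : ℝ)⁻¹ else 0) := by
  simp only [clauseProb, Fin.sum_univ_two]
  rfl

lemma IsRegular.weight_le {n d : ℕ} {Ω : Finset (Clause n)} (hΩ : IsRegular Ω d) (hn : 0 < n)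
    (hd : n ≤ B * d) (C : Clause n) :
    (if C ∈ Ω then (Ω.card : ℝ)⁻¹ else 0) ≤ B / (n : ℝ) ^ 2 := by
  have hn' : (0 : ℝ) < n := by exact_mod_cast hn
  split_ifs
  · have hd' : (n : ℝ) ≤ B * d := by exact_mod_cast hd
    have hd0 : (0 : ℝ) < d := by
      refine Nat.cast_pos.2 (Nat.pos_of_ne_zero ?_)
      rintro rfl
      omega
    rw [hΩ.card_eq]
    push_cast
    rw [inv_eq_one_div, div_le_div_iff₀ (by positivity) (by positivity)]
    nlinarith
  · positivity

lemma IsRegular.le_weight {n d : ℕ} {Ω : Finset (Clause n)} (hΩ : IsRegular Ω d) (hn : 0 < n)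
    (hd0 : 0 < d) (hd : d ≤ 2 * n) : 1 / (2 * (n : ℝ) ^ 2) ≤ (Ω.card : ℝ)⁻¹ := by
  have hn' : (0 : ℝ) < n := by exact_mod_cast hn
  have hd' : (d : ℝ) ≤ 2 * n := by exact_mod_cast hd
  have hd0' : (0 : ℝ) < d := by exact_mod_cast hd0
  rw [hΩ.card_eq]
  push_cast
  rw [inv_eq_one_div, div_le_div_iff₀ (by positivity) (by positivity)]
  nlinarith

lemma isBalanced_mixture (hp0 : 0 ≤ p) (hp1 : p ≤ 1) (hB : 2 ≤ B) (ht : 2 ≤ t) :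
    IsBalanced (clauseProb (B * t) t ![p, 1 - p] ![({1, 1} : Multiset ℕ), {2}]) B := by
  have hn : 0 < B * t := by positivity
  have hBt : 2 * t ≤ B * t := Nat.mul_le_mul_right t hB
  have h1 := isRegular_one_one B t
  have h2 := isRegular_two B t
  have hd1 : 0 < 2 * (B * t - t) := by omega
  have hd2 : 0 < 2 * (t - 1) := by omega
  constructor
  · intro C
    rw [clauseProb_mixture]
    have : 0 ≤ 1 - p := by linarith
    positivity
  · simp only [clauseProb_mixture, Finset.sum_add_distrib, ← Finset.mul_sum]
    rw [h1.sum_eq_one hn hd1, h2.sum_eq_one hn hd2]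
    ring
  · intro C hC
    rw [clauseProb_mixture] at hC
    by_cases hC1 : C ∈ clausesOfType (B * t) t {1, 1}
    · exact h1.isTwoClause C hC1
    · by_cases hC2 : C ∈ clausesOfType (B * t) t {2}
      · exact h2.isTwoClause C hC2
      · rw [if_neg hC1, if_neg hC2] at hC
        simp at hC
  · intro a
    simp only [clauseProb_mixture, Finset.sum_add_distrib, ← Finset.mul_sum]
    rw [h1.sum_implClause hd1, h2.sum_implClause hd2]
    ring
  · intro C
    rw [clauseProb_mixture]
    have e1 := h1.weight_le hn (B := B) (Nat.mul_le_mul_left B (by omega)) C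
    have e2 := h2.weight_le hn (B := B) (Nat.mul_le_mul_left B (by omega)) C
    nlinarith

lemma isSpread_mixture (hp0 : 0 ≤ p) (hp1 : p ≤ 1) (hB : 2 ≤ B) (ht : 2 ≤ t) {c : ℝ}
    (hc1 : p ≠ 0 → c ≤ p / 2) (hc2 : 1 - p ≠ 0 → c ≤ (1 - p) / 2) :
    IsSpread (clauseProb (B * t) t ![p, 1 - p] ![({1, 1} : Multiset ℕ), {2}])
      (c / ((B * t : ℕ) : ℝ) ^ 2) := by
  have hn : 0 < B * t := by positivity
  have hn' : (0 : ℝ) < (B * t : ℕ) := by exact_mod_cast hn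
  have hBt : 2 * t ≤ B * t := Nat.mul_le_mul_right t hB
  have hp2 : 0 ≤ 1 - p := by linarith
  have h1 : p ≠ 0 → ∀ a b : Fin (B * t) × Bool, comm t a.1 ≠ comm t b.1 →
      c / ((B * t : ℕ) : ℝ) ^ 2 ≤
        clauseProb (B * t) t ![p, 1 - p] ![({1, 1} : Multiset ℕ), {2}] {a, b} := by
    intro hp a b hab
    have hab' : a.1 ≠ b.1 := fun e => hab (by rw [e])
    rw [clauseProb_mixture, if_pos ((mem_clausesOfType_one_one_iff hab').2 hab)]
    have h := (isRegular_one_one B t).le_weight hn (by omega) (by omega)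
    calc c / ((B * t : ℕ) : ℝ) ^ 2 ≤ (p / 2) / ((B * t : ℕ) : ℝ) ^ 2 := by
          gcongr
          exact hc1 hp
      _ = p * (1 / (2 * ((B * t : ℕ) : ℝ) ^ 2)) := by ring
      _ ≤ p * _ := mul_le_mul_of_nonneg_left h hp0
      _ ≤ _ := le_add_of_nonneg_right (by positivity)
  have h2 : 1 - p ≠ 0 → ∀ a b : Fin (B * t) × Bool, a.1 ≠ b.1 → comm t a.1 = comm t b.1 →
      c / ((B * t : ℕ) : ℝ) ^ 2 ≤
        clauseProb (B * t) t ![p, 1 - p] ![({1, 1} : Multiset ℕ), {2}] {a, b} := by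
    intro hp a b hab' hab
    rw [clauseProb_mixture, if_pos ((mem_clausesOfType_two_iff hab').2 hab)]
    have h := (isRegular_two B t).le_weight hn (by omega) (by omega)
    calc c / ((B * t : ℕ) : ℝ) ^ 2 ≤ ((1 - p) / 2) / ((B * t : ℕ) : ℝ) ^ 2 := by
          gcongr
          exact hc2 hp
      _ = (1 - p) * (1 / (2 * ((B * t : ℕ) : ℝ) ^ 2)) := by ring
      _ ≤ (1 - p) * _ := mul_le_mul_of_nonneg_left h hp2
      _ ≤ _ := le_add_of_nonneg_left (by positivity)
  intro w K hw hq i j hji hi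
  have hne : ∀ k l, k < K → l < K → k ≠ l → (w k).1 ≠ (w l).1 := fun k l hk hl hkl e =>
    hkl (hw (Set.mem_Iio.2 hk) (Set.mem_Iio.2 hl) e)
  by_cases hp : p = 0
  · have hp' : 1 - p ≠ 0 := by simp [hp]
    have hstep : ∀ k, k + 1 < K → comm t (w k).1 = comm t (w (k + 1)).1 := by
      intro k hk
      by_contra hcomm
      refine hq k hk ?_
      rw [clauseProb_mixture, implClause,
        if_neg fun e => hcomm ((mem_clausesOfType_two_iff (a := neg (w k)) ?_).1 e)]
      · simp [hp]
      · exact hne k (k + 1) (by omega) hk (by omega)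
    have hcomm : ∀ k, j ≤ k → k < K → comm t (w j).1 = comm t (w k).1 := by
      intro k hjk
      induction k, hjk using Nat.le_induction with
      | base => exact fun _ => rfl
      | succ k _ ih => exact fun hk => (ih (by omega)).trans (hstep k hk)
    exact Or.inl (h2 hp' _ _ (hne j i (by omega) (by omega) (by omega))
      (hcomm i hji.le (by omega)))
  · by_cases hp' : 1 - p = 0
    · by_cases hij : comm t (w j).1 = comm t (w i).1
      · refine Or.inr (h1 hp _ _ fun hij' => hq i hi ?_)
        rw [clauseProb_mixture, implClause,
          if_neg fun e => (mem_clausesOfType_one_one_iff (a := neg (w i)) ?_).1 e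
            (hij.symm.trans hij')]
        · simp [hp']
        · exact hne i (i + 1) (by omega) hi (by omega)
      · exact Or.inl (h1 hp _ _ hij)
    · left
      by_cases hij : comm t (w j).1 = comm t (w i).1
      · exact h2 hp' _ _ (hne j i (by omega) (by omega) (by omega)) hij
      · exact h1 hp _ _ hij

end Mixture

section Asymptotics

lemma exp_neg_mul_add_le_one {A c k x y : ℝ} (hA : 0 < A) (hx : 0 ≤ x) (hxc : x ≤ c) (hy : 0 < y)
    (h : k * (1 + A * c) ≤ y * A) : Real.exp (-(A * x)) + k * x / y ≤ 1 := by
  have hAx : 0 ≤ A * x := by positivity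
  have h1 : Real.exp (-(A * x)) ≤ 1 / (1 + A * x) := by
    rw [Real.exp_neg, ← one_div]
    exact one_div_le_one_div_of_le (by linarith) (by linarith [Real.add_one_le_exp (A * x)])
  rcases le_or_gt k 0 with hk | hk
  · have h2 : k * x / y ≤ 0 :=
      div_nonpos_of_nonpos_of_nonneg (mul_nonpos_of_nonpos_of_nonneg hk hx) hy.le
    have h3 : Real.exp (-(A * x)) ≤ 1 := Real.exp_le_one_iff.2 (by linarith)
    linarith
  · have h2 : k * x / y ≤ A * x / (1 + A * x) := by
      rw [div_le_div_iff₀ hy (by linarith)]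
      have : k * (1 + A * x) ≤ y * A :=
        (mul_le_mul_of_nonneg_left (by nlinarith) hk.le).trans h
      nlinarith
    have h3 : 1 / (1 + A * x) + A * x / (1 + A * x) = 1 := by
      field_simp
    linarith

variable {n : ℕ} {q : Clause n → ℝ} {c κ ε : ℝ}

lemma IsBalanced.prob_not_hasPath_le_exp (hq : IsBalanced q c) (hc : 1 ≤ c) (hε : 0 < ε)
    (hε1 : ε ≤ 1) (hn : 144 * c ≤ ε ^ 2 * n) {K v k : ℕ} (hK : 0 < K)
    (hv : (v : ℝ) ≤ ε ^ 2 / (64 * c) * n) (hKv : (K : ℝ) ≤ ε / 32 * v)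
    (hk : (1 + ε) * n ≤ k) (hk' : (k : ℝ) ≤ 3 * n) :
    prob q k (fun I => ¬ HasPath K (Finset.univ.image I)) ≤ Real.exp (-(ε ^ 2 / 32 * v)) := by
  have hn0 : (0 : ℝ) < n := by
    by_contra! h
    have : ε ^ 2 * n ≤ 0 := mul_nonpos_of_nonneg_of_nonpos (by positivity) h
    linarith
  have hδ : ε ^ 2 / (64 * c) ≤ ε ^ 2 / 64 := by gcongr; linarith
  have hcδ : 2 * c * (ε ^ 2 / (64 * c)) = ε ^ 2 / 32 := by
    field_simp
    norm_num
  have hε2 : ε ^ 2 ≤ ε := by nlinarith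
  have hv2 : (v : ℝ) ≤ ε ^ 2 / 64 * n := hv.trans (by gcongr)
  have hvn : (v : ℝ) ≤ n := by nlinarith
  have hvk : (v : ℝ) ≤ k := by nlinarith
  have hcv : 2 * v * (c / (n : ℝ) ^ 2) ≤ ε / 32 * (1 / n) := by
    calc 2 * v * (c / (n : ℝ) ^ 2) ≤ 2 * (ε ^ 2 / (64 * c) * n) * (c / (n : ℝ) ^ 2) := by gcongr
      _ = 2 * c * (ε ^ 2 / (64 * c)) * (1 / n) := by field_simp
      _ ≤ _ := by
        rw [hcδ]
        gcongr
  set g := ε ^ 2 / 32 with hg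
  set y := 1 + ε / 2 - 2 * g with hy
  have hg0 : 0 < g := by positivity
  have hy1 : 1 ≤ y := by linarith
  have hn1 : 0 < 1 / (n : ℝ) := by positivity
  have hA : 0 < (k : ℝ) - v - ε / 2 * n := by nlinarith
  have hstep : ∀ C, Real.exp (-(((k : ℝ) - v - ε / 2 * n) * q C)) + k * q C / y ≤ 1 := by
    intro C
    refine exp_neg_mul_add_le_one hA (hq.nonneg C) (hq.le_bound C) (by linarith) ?_
    have h1 : ((k : ℝ) - v - ε / 2 * n) * (c / (n : ℝ) ^ 2) ≤ 3 * c / n := by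
      calc _ ≤ 3 * n * (c / (n : ℝ) ^ 2) := by
            gcongr
            have : 0 ≤ ε / 2 * n := by positivity
            have : (0 : ℝ) ≤ v := by positivity
            linarith
        _ = _ := by field_simp
    have h2 : (k : ℝ) * (3 * c / n) ≤ 9 * c := by
      calc _ ≤ 3 * n * (3 * c / n) := by gcongr
        _ = _ := by field_simp; norm_num
    have h3 : (k : ℝ) * (1 + ((k : ℝ) - v - ε / 2 * n) * (c / (n : ℝ) ^ 2)) ≤ k + 9 * c := by
      have := mul_le_mul_of_nonneg_left h1 (Nat.cast_nonneg (α := ℝ) k)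
      linarith
    have hy2 : y ≤ 2 := by linarith
    have h4 : y * v ≤ 2 * (ε ^ 2 / 64 * n) := by gcongr
    have h5 : (1 + ε) * n * (y - 1) ≤ k * (y - 1) := by gcongr
    have h6 : 9 * c ≤ n * ((1 + ε) * (y - 1) - y * (ε / 2) - ε ^ 2 / 32) := by
      have : ε ^ 2 / 16 ≤ (1 + ε) * (y - 1) - y * (ε / 2) - ε ^ 2 / 32 := by
        rw [hy, hg]
        nlinarith [pow_pos hε 3]
      have := mul_le_mul_of_nonneg_left this hn0.le
      linarith
    linarith
  have hfac : 0 ≤ 1 / (n : ℝ) - 2 * v * (c / (n : ℝ) ^ 2) := by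
    have : ε / 32 * (1 / n) ≤ 1 * (1 / (n : ℝ)) := by gcongr; linarith
    linarith
  refine (hq.prob_not_hasPath_le hK (by exact_mod_cast hvn) (by exact_mod_cast hvk)
    (β := ε / 2 * n) (by positivity) hy1 hstep hfac).trans ?_
  have hyexp : y ^ v ≤ Real.exp (v * (y - 1)) := by
    rw [Real.exp_nat_mul]
    exact pow_le_pow_left₀ (by linarith) (by linarith [Real.add_one_le_exp (y - 1)]) v
  calc _ ≤ Real.exp (v * (y - 1)) * Real.exp (-(ε / 2 * n *
          (((v : ℝ) - K) * (1 / (n : ℝ) - 2 * v * (c / (n : ℝ) ^ 2))))) := by gcongr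
    _ ≤ _ := by
      rw [← Real.exp_add, Real.exp_le_exp]
      have hv0 : (0 : ℝ) ≤ v := by positivity
      have hKv' : (K : ℝ) ≤ v := hKv.trans (mul_le_of_le_one_left hv0 (by linarith))
      have h1 : (1 - ε / 32) * v * ((1 - ε / 32) * (1 / n)) ≤
          ((v : ℝ) - K) * (1 / (n : ℝ) - 2 * v * (c / (n : ℝ) ^ 2)) := by
        refine mul_le_mul (by linarith) (by linarith) ?_ (sub_nonneg.2 hKv')
        exact mul_nonneg (by linarith) hn1.le
      have h2 := mul_le_mul_of_nonneg_left h1 (by positivity : 0 ≤ ε / 2 * n)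
      have h3 : ε / 2 * n * ((1 - ε / 32) * v * ((1 - ε / 32) * (1 / n))) =
          v * (ε / 2 * (1 - ε / 32) ^ 2) := by field_simp
      have h4 : v * (ε / 2 - g) ≤ v * (ε / 2 * (1 - ε / 32) ^ 2) := by
        gcongr
        rw [hg]
        nlinarith [pow_pos hε 3]
      rw [h3] at h2
      have h5 : v * (y - 1) = v * (ε / 2 - g) - g * v := by
        rw [hy]
        ring
      linarith

/-- A balanced and spread random two-clause model of density at least `1 + 2 * ε` is satisfiable
with exponentially small probability. -/
lemma prob_satInstance_le_exp {c₀ : ℝ} (hc : 1 ≤ c) (hc₀ : 0 < c₀) (hε : 0 < ε) (hε1 : ε ≤ 1) :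
    ∃ a > 0, ∀ (n : ℕ) (q : Clause n → ℝ) (m : ℕ), IsBalanced q c →
      IsSpread q (c₀ / (n : ℝ) ^ 2) → 49152 * c ≤ ε ^ 3 * n → (1 + 2 * ε) * n ≤ m →
      prob q m SatInstance ≤ 3 * Real.exp (-(a * n)) := by
  set δ := ε ^ 2 / (64 * c) with hδ
  have hδ0 : 0 < δ := by positivity
  set a₁ := ε ^ 2 / 32 * (δ / 2) with ha₁
  set a₂ := ε / 2 * ((ε / 384 * (δ / 2)) ^ 2 * c₀) with ha₂
  refine ⟨min a₁ a₂, by positivity, fun n q m hq hs hn hm => ?_⟩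
  have hn0 : (0 : ℝ) < n := by
    by_contra! h
    have : ε ^ 3 * n ≤ 0 := mul_nonpos_of_nonneg_of_nonpos (by positivity) h
    linarith
  have hδn : 768 ≤ ε * (δ * n) := by
    rw [hδ]
    have : ε * (ε ^ 2 / (64 * c) * n) = ε ^ 3 * n / (64 * c) := by ring
    rw [this, le_div_iff₀ (by positivity)]
    linarith
  have hδn' : 768 ≤ δ * n := hδn.trans (by nlinarith [mul_pos hδ0 hn0])
  have hε2 : 144 * c ≤ ε ^ 2 * n := by
    have : ε ^ 3 * n ≤ ε ^ 2 * n := by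
      gcongr ?_ * _
      nlinarith [pow_pos hε 2]
    linarith
  have hεn : 2 ≤ ε * n := by
    have : ε ^ 2 * n ≤ ε * n := by
      gcongr ?_ * _
      nlinarith
    linarith
  set v := ⌊δ * n⌋₊ with hv
  have hv1 : (v : ℝ) ≤ δ * n := Nat.floor_le (by positivity)
  have hv2 : δ / 2 * n ≤ v := by linarith [Nat.lt_floor_add_one (δ * n)]
  set h := ⌊ε / 192 * v⌋₊ with hh
  have hv3 : ε * (δ / 2 * n) ≤ ε * v := by gcongr
  have hh1 : (h : ℝ) ≤ ε / 192 * v := Nat.floor_le (by positivity)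
  have hh2 : ε / 384 * v ≤ h := by linarith [Nat.lt_floor_add_one (ε / 192 * v)]
  have hh0 : 0 < h := by
    have : (0 : ℝ) < h := by linarith
    exact_mod_cast this
  set k := ⌈(1 + ε) * n⌉₊ with hk
  have hk1 : (1 + ε) * n ≤ k := Nat.le_ceil _
  have hk2 : (k : ℝ) ≤ (1 + ε) * n + 1 := (Nat.ceil_lt_add_one (by positivity)).le
  have hεn' : ε * n ≤ n := by nlinarith
  have hkm : k ≤ m := by
    have : (k : ℝ) ≤ m := by linarith
    exact_mod_cast this
  obtain ⟨l, rfl⟩ := Nat.exists_eq_add_of_le hkm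
  push_cast at hm
  have hl : ε / 2 * n ≤ l := by linarith
  have e1 : prob q k (fun I => ¬ HasPath (6 * h) (Finset.univ.image I)) ≤
      Real.exp (-(min a₁ a₂ * n)) := by
    refine (hq.prob_not_hasPath_le_exp hc hε hε1 hε2 (by omega) hv1 ?_ hk1 (by linarith)).trans ?_
    · push_cast
      linarith
    · rw [Real.exp_le_exp, neg_le_neg_iff]
      calc min a₁ a₂ * n ≤ a₁ * n := by gcongr; exact min_le_left _ _
        _ = ε ^ 2 / 32 * (δ / 2 * n) := by rw [ha₁]; ring
        _ ≤ _ := by gcongr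
  have e2 : Real.exp (-(l * ((h : ℝ) ^ 2 * (c₀ / (n : ℝ) ^ 2)))) ≤
      Real.exp (-(min a₁ a₂ * n)) := by
    rw [Real.exp_le_exp, neg_le_neg_iff]
    calc min a₁ a₂ * n ≤ a₂ * n := by gcongr; exact min_le_right _ _
      _ = ε / 2 * n * ((ε / 384 * (δ / 2 * n)) ^ 2 * (c₀ / (n : ℝ) ^ 2)) := by
        rw [ha₂]
        field_simp
      _ ≤ l * ((h : ℝ) ^ 2 * (c₀ / (n : ℝ) ^ 2)) := by
        gcongr
        exact le_trans (by gcongr) hh2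
  have := hq.prob_satInstance_le hs h k l
  linarith

/-- A balanced random two-clause model of density at most `ρ < 1` is unsatisfiable with
probability `O(1 / n)`. -/
lemma prob_not_satInstance_le_div {ρ : ℝ} (hρ : 0 ≤ ρ) (hρ1 : ρ < 1) (c : ℝ) :
    ∃ M : ℝ, ∀ (n : ℕ) (q : Clause n → ℝ) (m : ℕ), IsBalanced q c → (m : ℝ) / n ≤ ρ →
      prob q m (fun I => ¬ SatInstance I) ≤ M / n := by
  have hsum : Summable fun s : ℕ => ((s : ℝ) + 1) ^ 2 * ρ ^ (s + 2) := by
    have h := (summable_nat_add_iff 1).2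
      (summable_pow_mul_geometric_of_norm_lt_one 2 (r := ρ) (by rwa [Real.norm_of_nonneg hρ]))
    refine (h.mul_right ρ).congr fun s => ?_
    push_cast
    ring
  refine ⟨4 * c ^ 2 * ∑' s : ℕ, ((s : ℝ) + 1) ^ 2 * ρ ^ (s + 2), fun n q m hq hm => ?_⟩
  refine (hq.prob_not_satInstance_le m).trans ?_
  calc _ ≤ ∑ s : Fin n, 4 * c ^ 2 * (((s : ℕ) : ℝ) + 1) ^ 2 * ρ ^ ((s : ℕ) + 2) / n := by
        gcongr
    _ = 4 * c ^ 2 * (∑ s : Fin n, (((s : ℕ) : ℝ) + 1) ^ 2 * ρ ^ ((s : ℕ) + 2)) / n := by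
        rw [Finset.mul_sum, Finset.sum_div]
        simp only [mul_assoc]
    _ ≤ _ := by
        gcongr
        rw [Fin.sum_univ_eq_sum_range (fun s : ℕ => ((s : ℝ) + 1) ^ 2 * ρ ^ (s + 2)) n]
        exact hsum.sum_le_tsum _ fun s _ => by positivity

end Asymptotics

/-- **Theorem 5.** For fixed `0 ≤ p ≤ 1` and a fixed number `B ≥ 2` of communities, the
satisfiability threshold of the model `F(n, m, B, p·P_(1,1) + (1-p)·P_(2))` (with `n`
ranging over multiples of `B`, so the community size is `t = n/B`) is `1`: if
`m(n)/n → r < 1` the instance is SAT w.h.p., and if `r > 1` it is UNSAT w.h.p. -/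
theorem threshold_one_for_mixed_two_sat (p : ℝ) (hp0 : 0 ≤ p) (hp1 : p ≤ 1)
    (B : ℕ) (hB : 2 ≤ B) (m : ℕ → ℕ) (r : ℝ)
    (hr : Tendsto (fun t : ℕ => (m (B * t) : ℝ) / ((B * t : ℕ) : ℝ)) atTop (nhds r)) :
    (r < 1 → Tendsto (fun t : ℕ =>
        satProb (B * t) (m (B * t)) t ![p, 1 - p] ![({1, 1} : Multiset ℕ), {2}])
      atTop (nhds 1)) ∧
    (1 < r → Tendsto (fun t : ℕ =>
        satProb (B * t) (m (B * t)) t ![p, 1 - p] ![({1, 1} : Multiset ℕ), {2}])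
      atTop (nhds 0)) := by
  have hn : Tendsto (fun t : ℕ => ((B * t : ℕ) : ℝ)) atTop atTop :=
    tendsto_natCast_atTop_atTop.comp (tendsto_id.const_mul_atTop' (by omega))
  have hB1 : (1 : ℝ) ≤ B := by exact_mod_cast (by omega : 1 ≤ B)
  have hbal := fun t (ht : 2 ≤ t) => isBalanced_mixture (p := p) hp0 hp1 hB ht
  refine ⟨fun hr1 => ?_, fun hr1 => ?_⟩
  · have hr0 : 0 ≤ r := ge_of_tendsto' hr fun t => by positivity
    obtain ⟨ρ, hρ, hρ1⟩ := exists_between hr1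
    obtain ⟨M, hM⟩ := prob_not_satInstance_le_div (hr0.trans hρ.le) hρ1 (B : ℝ)
    have hlim : Tendsto (fun t : ℕ => 1 - M / ((B * t : ℕ) : ℝ)) atTop (nhds 1) := by
      simpa using (hn.const_div_atTop M).const_sub 1
    refine tendsto_of_tendsto_of_tendsto_of_le_of_le' hlim tendsto_const_nhds ?_ ?_
    · filter_upwards [hr.eventually_le_const hρ, eventually_ge_atTop 2] with t hmt ht
      have h1 := hM _ _ _ (hbal t ht) hmt
      have h2 := prob_add_prob_not (hbal t ht).sum_eq_one
        (SatInstance : (Fin (m (B * t)) → Clause (B * t)) → Prop)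
      change _ ≤ prob _ _ SatInstance
      linarith
    · filter_upwards [eventually_ge_atTop 2] with t ht
      exact prob_le_one (hbal t ht).nonneg (hbal t ht).sum_eq_one _
  · obtain ⟨c₀, hc₀, hc1, hc2⟩ : ∃ c₀ > 0, (p ≠ 0 → c₀ ≤ p / 2) ∧
        (1 - p ≠ 0 → c₀ ≤ (1 - p) / 2) := by
      by_cases h0 : p = 0
      · exact ⟨1 / 2, by norm_num, fun h => absurd h0 h, fun _ => by simp [h0]⟩
      · have hp : 0 < p := lt_of_le_of_ne hp0 (Ne.symm h0)
        by_cases h1 : 1 - p = 0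
        · exact ⟨p / 2, by positivity, fun _ => le_rfl, fun h => absurd h1 h⟩
        · have hp' : 0 < 1 - p := lt_of_le_of_ne (by linarith) (Ne.symm h1)
          exact ⟨min (p / 2) ((1 - p) / 2), by positivity, fun _ => min_le_left _ _,
            fun _ => min_le_right _ _⟩
    set ε := min 1 ((r - 1) / 3) with hε
    have hε0 : 0 < ε := lt_min one_pos (by linarith)
    have hε1 : ε ≤ 1 := min_le_left _ _
    have hεr : 1 + 2 * ε < r := by linarith [min_le_right 1 ((r - 1) / 3)]
    obtain ⟨a, ha, hbound⟩ := prob_satInstance_le_exp hB1 hc₀ hε0 hε1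
    have hlim : Tendsto (fun t : ℕ => 3 * Real.exp (-(a * ((B * t : ℕ) : ℝ)))) atTop (nhds 0) := by
      simpa using (Real.tendsto_exp_neg_atTop_nhds_zero.comp (hn.const_mul_atTop ha)).const_mul 3
    refine tendsto_of_tendsto_of_tendsto_of_le_of_le' tendsto_const_nhds hlim ?_ ?_
    · filter_upwards [eventually_ge_atTop 2] with t ht
      exact prob_nonneg (hbal t ht).nonneg _
    · filter_upwards [hr.eventually_const_le hεr, eventually_ge_atTop 2,
        (hn.const_mul_atTop (pow_pos hε0 3)).eventually_ge_atTop (49152 * (B : ℝ))]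
        with t hmt ht hnt
      have hn0 : (0 : ℝ) < ((B * t : ℕ) : ℝ) := by exact_mod_cast (by positivity : 0 < B * t)
      exact hbound _ _ _ (hbal t ht) (isSpread_mixture hp0 hp1 hB ht hc1 hc2) hnt
        ((le_div_iff₀ hn0).1 hmt)

end RandIndSAT
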